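/- arXiv:1804.10573 — 2 statements merged into one kernel-verified Lean document; each statement's English description precedes it below -/
import Mathlib

section
/- If ν is not a monomial, then for any r ∈ (−1,1) and any q, q_1, q_2 ∈ (0,1], the 4×4 matrix Σ_{U,X}(r,q_1,q_2) and the 2×2 matrix Σ_q are invertible, and hence strictly positive definite. -/
open MeasureTheory ProbabilityTheory Real Filter Set Matrix
open scoped ENNReal

noncomputable section

namespace SpinGlass


/-- Coefficient decay: `limsup p⁻¹ log γ_p < 0`. -/
def GammaDecay (γ : ℕ → ℝ) : Prop :=
  (∀ p, 0 ≤ γ p) ∧ ∃ ρ : ℝ, 0 < ρ ∧ ρ < 1 ∧ ∀ᶠ p in atTop, γ p ≤ ρ ^ p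

/-- ν(x) = Σ_{p≥2} γ_p² xᵖ. -/
def nuF (γ : ℕ → ℝ) (x : ℝ) : ℝ := ∑' p : ℕ, if 2 ≤ p then γ p ^ 2 * x ^ p else 0

/-- ν′(x), termwise. -/
def nuD1 (γ : ℕ → ℝ) (x : ℝ) : ℝ :=
  ∑' p : ℕ, if 2 ≤ p then γ p ^ 2 * p * x ^ (p - 1) else 0

/-- ν″(x), termwise. -/
def nuD2 (γ : ℕ → ℝ) (x : ℝ) : ℝ :=
  ∑' p : ℕ, if 2 ≤ p then γ p ^ 2 * p * ((p : ℝ) - 1) * x ^ (p - 2) else 0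

/-- ν is mixed (not a monomial). -/
def Mixed (γ : ℕ → ℝ) : Prop :=
  ∃ p q : ℕ, 2 ≤ p ∧ 2 ≤ q ∧ p ≠ q ∧ γ p ≠ 0 ∧ γ q ≠ 0

/-- The logarithmic potential Ω of the semicircle law. -/
def Omega (x : ℝ) : ℝ :=
  if |x| ≤ 2 then x ^ 2 / 4 - 1 / 2
  else x ^ 2 / 4 - 1 / 2 -
    (|x| / 4 * Real.sqrt (x ^ 2 - 4) - Real.log (Real.sqrt (x ^ 2 / 4 - 1) + |x| / 2))

/-- The 2×2 covariance matrix Σ_q. -/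
def SigmaQ (γ : ℕ → ℝ) (q : ℝ) : Matrix (Fin 2) (Fin 2) ℝ :=
  !![nuF γ (q ^ 2), q ^ 2 * nuD1 γ (q ^ 2);
     q ^ 2 * nuD1 γ (q ^ 2), q ^ 4 * nuD2 γ (q ^ 2) + q ^ 2 * nuD1 γ (q ^ 2)]

/-- The complexity function Θ_{ν,q}(u,x). -/
def Theta (γ : ℕ → ℝ) (q u x : ℝ) : ℝ :=
  1 / 2 + 1 / 2 * Real.log (q ^ 2 * nuD2 γ (q ^ 2) / nuD1 γ (q ^ 2))
    - 1 / 2 * (![u, x] ⬝ᵥ ((SigmaQ γ q)⁻¹ *ᵥ ![u, x]))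
    + Omega (x / (q * Real.sqrt (nuD2 γ (q ^ 2))))

/-- −E₀(ν) is the minimal E with sup_x Θ_{ν,1}(E,x) = 0. -/
def E0 (γ : ℕ → ℝ) : ℝ := - sInf {E : ℝ | (⨆ x : ℝ, Theta γ 1 E x) = 0}

/-- −x₀(ν) is the (unique) maximizer of x ↦ Θ_{ν,1}(−E₀(ν),x). -/
def x0 (γ : ℕ → ℝ) : ℝ :=
  - sSup {x : ℝ | ∀ y : ℝ, Theta γ 1 (-(E0 γ)) y ≤ Theta γ 1 (-(E0 γ)) x}

/-- The coefficients of ν_q(x) = Σ γ_p² q^{2p} xᵖ. -/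
def gammaScale (γ : ℕ → ℝ) (q : ℝ) : ℕ → ℝ := fun p => γ p * q ^ p

def E0q (γ : ℕ → ℝ) (q : ℝ) : ℝ := E0 (gammaScale γ q)

def x0q (γ : ℕ → ℝ) (q : ℝ) : ℝ := q⁻¹ * x0 (gammaScale γ q)

/-- d(r,q₁,q₂) = rν′(q₁q₂r) − q₁q₂ν″(q₁q₂r)(1−r²). -/
def dA (γ : ℕ → ℝ) (r q1 q2 : ℝ) : ℝ :=
  r * nuD1 γ (q1 * q2 * r) - q1 * q2 * nuD2 γ (q1 * q2 * r) * (1 - r ^ 2)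

def a2 (γ : ℕ → ℝ) (r q1 q2 : ℝ) : ℝ :=
  nuD1 γ (q2 ^ 2) / (nuD1 γ (q1 ^ 2) * nuD1 γ (q2 ^ 2) - dA γ r q1 q2 ^ 2)

def a4 (γ : ℕ → ℝ) (r q1 q2 : ℝ) : ℝ :=
  -dA γ r q1 q2 / (nuD1 γ (q1 ^ 2) * nuD1 γ (q2 ^ 2) - dA γ r q1 q2 ^ 2)

/-- υ(r,q₁,q₂) = q₁q₂rν″(q₁q₂r) + ν′(q₁q₂r). -/
def ups (γ : ℕ → ℝ) (r q1 q2 : ℝ) : ℝ :=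
  q1 * q2 * r * nuD2 γ (q1 * q2 * r) + nuD1 γ (q1 * q2 * r)

def SigmaU (γ : ℕ → ℝ) (r q1 q2 : ℝ) : Matrix (Fin 2) (Fin 2) ℝ :=
  !![nuF γ (q1 ^ 2) - q1 ^ 2 * a2 γ r q2 q1 * nuD1 γ (q1 * q2 * r) ^ 2 * (1 - r ^ 2),
     nuF γ (q1 * q2 * r) + q1 * q2 * a4 γ r q1 q2 * nuD1 γ (q1 * q2 * r) ^ 2 * (1 - r ^ 2);
     nuF γ (q1 * q2 * r) + q1 * q2 * a4 γ r q1 q2 * nuD1 γ (q1 * q2 * r) ^ 2 * (1 - r ^ 2),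
     nuF γ (q2 ^ 2) - q2 ^ 2 * a2 γ r q1 q2 * nuD1 γ (q1 * q2 * r) ^ 2 * (1 - r ^ 2)]

def SigmaX (γ : ℕ → ℝ) (r q1 q2 : ℝ) : Matrix (Fin 2) (Fin 2) ℝ :=
  !![q1 ^ 2 * nuD2 γ (q1 ^ 2) + nuD1 γ (q1 ^ 2)
        - ups γ r q1 q2 ^ 2 * (1 - r ^ 2) * a2 γ r q2 q1,
     q1 * q2 * r ^ 2 * nuD2 γ (q1 * q2 * r) + r * nuD1 γ (q1 * q2 * r)
        + ups γ r q1 q2 ^ 2 * (1 - r ^ 2) * a4 γ r q1 q2;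
     q1 * q2 * r ^ 2 * nuD2 γ (q1 * q2 * r) + r * nuD1 γ (q1 * q2 * r)
        + ups γ r q1 q2 ^ 2 * (1 - r ^ 2) * a4 γ r q1 q2,
     q2 ^ 2 * nuD2 γ (q2 ^ 2) + nuD1 γ (q2 ^ 2)
        - ups γ r q1 q2 ^ 2 * (1 - r ^ 2) * a2 γ r q1 q2]

def SigmaB (γ : ℕ → ℝ) (r q1 q2 : ℝ) : Matrix (Fin 2) (Fin 2) ℝ :=
  !![q1 * nuD1 γ (q1 ^ 2)
        - q1 * (1 - r ^ 2) * nuD1 γ (q1 * q2 * r) * ups γ r q1 q2 * a2 γ r q2 q1,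
     q1 * r * nuD1 γ (q1 * q2 * r)
        + q1 * (1 - r ^ 2) * nuD1 γ (q1 * q2 * r) * ups γ r q1 q2 * a4 γ r q1 q2;
     q2 * r * nuD1 γ (q1 * q2 * r)
        + q2 * (1 - r ^ 2) * nuD1 γ (q1 * q2 * r) * ups γ r q2 q1 * a4 γ r q2 q1,
     q2 * nuD1 γ (q2 ^ 2)
        - q2 * (1 - r ^ 2) * nuD1 γ (q1 * q2 * r) * ups γ r q2 q1 * a2 γ r q1 q2]

/-- The 4×4 covariance matrix Σ_{U,X}(r,q₁,q₂), as a block matrix. -/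
def SigmaUX (γ : ℕ → ℝ) (r q1 q2 : ℝ) :
    Matrix (Fin 2 ⊕ Fin 2) (Fin 2 ⊕ Fin 2) ℝ :=
  Matrix.fromBlocks (SigmaU γ r q1 q2) (SigmaB γ r q1 q2)
    (SigmaB γ r q1 q2)ᵀ (SigmaX γ r q1 q2)

/-- The pair complexity Ψ_{ν,q₁,q₂}(r,u₁,u₂,x₁,x₂). -/
def Psi (γ : ℕ → ℝ) (q1 q2 r u1 u2 x1 x2 : ℝ) : ℝ :=
  1 + 1 / 2 * Real.log ((1 - r ^ 2) *
        (q1 ^ 2 * q2 ^ 2 * nuD2 γ (q1 ^ 2) * nuD2 γ (q2 ^ 2)) /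
        (nuD1 γ (q1 ^ 2) * nuD1 γ (q2 ^ 2) - nuD1 γ (q1 * q2 * r) ^ 2))
    - 1 / 2 * ((Sum.elim ![u1, u2] ![x1, x2]) ⬝ᵥ
        ((SigmaUX γ r q1 q2)⁻¹ *ᵥ (Sum.elim ![u1, u2] ![x1, x2])))
    + Omega (x1 / (q1 * Real.sqrt (nuD2 γ (q1 ^ 2))))
    + Omega (x2 / (q2 * Real.sqrt (nuD2 γ (q2 ^ 2))))

/-- Ψ⁰_ν(r). -/
def Psi0 (γ : ℕ → ℝ) (r : ℝ) : ℝ :=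
  Psi γ 1 1 r (-(E0 γ)) (-(E0 γ)) (-(x0 γ)) (-(x0 γ))

/-- G(ν). -/
def Gfun (γ : ℕ → ℝ) : ℝ :=
  Real.log (nuD2 γ 1 / nuD1 γ 1) -
    (nuD2 γ 1 + nuD1 γ 1) * (nuD2 γ 1 * nuF γ 1 + nuD1 γ 1 ^ 2 - nuD1 γ 1 * nuF γ 1) /
      (nuD2 γ 1 * nuD1 γ 1 ^ 2)

/-- ν is pure-like. -/
def PureLike (γ : ℕ → ℝ) : Prop := 0 < Gfun γ

/-- Condition M. -/
def ConditionM (γ : ℕ → ℝ) : Prop :=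
  Mixed γ ∧ PureLike γ ∧
    iteratedDeriv 2 (Psi0 γ) 0 < 0 ∧
    (∀ r ∈ Set.Ioo (-1 : ℝ) 1, r ≠ 0 → Psi0 γ r < Psi0 γ 0) ∧
    Filter.limsup (fun r : ℝ => (Psi0 γ r : EReal)) (nhdsWithin 1 (Set.Ioo (-1 : ℝ) 1))
      < ((Psi0 γ 0 : ℝ) : EReal) ∧
    Filter.limsup (fun r : ℝ => (Psi0 γ r : EReal)) (nhdsWithin (-1) (Set.Ioo (-1 : ℝ) 1))
      < ((Psi0 γ 0 : ℝ) : EReal)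

/-! `Σ_{U,X}` is a conditional covariance, hence a Schur complement: it is positive definite as soon
as the joint covariance of values, radial derivatives and tangential derivatives at the two points
is. All these variables are jet functionals `H ↦ a H(x) + ∂_v H(x)` on the plane spanned by the two
points, and it suffices that no nontrivial combination of two jets, at `x` and at `y`, has variance
zero.

The variance is additive over the monomials of `ν`. The `p`-th one realises the jet `(x, a, v)`
as the symmetric tensor `x^(p-1) · (a x + p v)`, up to a constant. For `p ≥ 3` and independent
`x`, `y` an equality `x^(p-1) ξ + y^(p-1) η = 0` forces `ξ = η = 0`; for `p = 2` this still holds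
if `ξ ∥ x` and `η ∥ y`. So one exponent `p ≥ 3` gives `a x + p v = 0`, and a second exponent then
gives `a = 0`, `v = 0`. Quantitatively, in rotating frames the norm of that tensor splits under
the exchange of the two points into two binary quadratic forms whose discriminants are sums of
squares. -/

open scoped InnerProductSpace ComplexConjugate

/-! ### Binary quadratic forms -/

section BinaryForms

variable {a b c : ℝ}

lemma binaryForm_nonneg (ha : 0 < a) (h : 0 ≤ a * c - b ^ 2) (x y : ℝ) :
    0 ≤ a * x ^ 2 + 2 * b * x * y + c * y ^ 2 := by
  have hsq : a * (a * x ^ 2 + 2 * b * x * y + c * y ^ 2)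
      = (a * x + b * y) ^ 2 + (a * c - b ^ 2) * y ^ 2 := by ring
  have hnonneg : 0 ≤ a * (a * x ^ 2 + 2 * b * x * y + c * y ^ 2) := by rw [hsq]; positivity
  exact nonneg_of_mul_nonneg_right hnonneg ha

lemma eq_zero_of_binaryForm_eq_zero (ha : 0 < a) (h : 0 < a * c - b ^ 2) {x y : ℝ}
    (h0 : a * x ^ 2 + 2 * b * x * y + c * y ^ 2 = 0) : x = 0 ∧ y = 0 := by
  have hsq : (a * x + b * y) ^ 2 + (a * c - b ^ 2) * y ^ 2 = 0 := by linear_combination a * h0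
  obtain ⟨hx, hy⟩ := (add_eq_zero_iff_of_nonneg (by positivity) (by positivity)).1 hsq
  have hy : y = 0 := by simpa [h.ne'] using hy
  subst hy
  exact ⟨by simpa [ha.ne'] using hx, rfl⟩

lemma one_add_mul_pow_pos {ε r : ℝ} (hε : ε ^ 2 = 1) (hr : |r| < 1) {m : ℕ} (hm : m ≠ 0) :
    0 < 1 + ε * r ^ m := by
  have hε' : |ε| = 1 := by rwa [← sq_eq_sq₀ (abs_nonneg ε) zero_le_one, sq_abs, one_pow]
  have : |ε * r ^ m| < 1 := by
    rw [abs_mul, hε', one_mul, abs_pow]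
    exact pow_lt_one₀ (abs_nonneg r) hr hm
  linarith [neg_abs_le (ε * r ^ m)]

end BinaryForms

/-! ### The exchange-symmetric and exchange-antisymmetric blocks -/

section ExchangeForm

variable {n : ℕ} {ε r s : ℝ}

/-- The block of `powNormSq` on vectors that are symmetric (`ε = 1`) or antisymmetric (`ε = -1`)
under the exchange of two unit vectors at an angle with cosine `r` and sine `s`. -/
def exchangeForm (n : ℕ) (ε r s X Y : ℝ) : ℝ :=
  (n + 2) * (1 + ε * r ^ (n + 2)) * X ^ 2 + 2 * (ε * ((n + 2) * s * r ^ (n + 1))) * X * Y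
    + (1 - ε * (r ^ (n + 2) - (n + 1) * r ^ n * s ^ 2)) * Y ^ 2

lemma sum_range_pow_add_mul_pow_sq (n : ℕ) (r : ℝ) (hε : ε ^ 2 = 1) :
    ∑ j ∈ Finset.range (n + 1), (r ^ j + ε * r ^ (n - j)) ^ 2
      = 2 * ∑ j ∈ Finset.range (n + 1), (r ^ 2) ^ j + 2 * ε * (n + 1) * r ^ n := by
  have hterm : ∀ j ∈ Finset.range (n + 1),
      (r ^ j + ε * r ^ (n - j)) ^ 2 = (r ^ 2) ^ j + (r ^ 2) ^ (n - j) + 2 * ε * r ^ n := by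
    intro j hj
    have hpow : r ^ n = r ^ j * r ^ (n - j) := by
      rw [← pow_add, Nat.add_sub_cancel' (Finset.mem_range_succ_iff.1 hj)]
    rw [hpow, ← pow_mul, ← pow_mul, mul_comm 2 j, mul_comm 2 (n - j), pow_mul, pow_mul]
    linear_combination (r ^ (n - j)) ^ 2 * hε
  have hreflect : ∑ j ∈ Finset.range (n + 1), (r ^ 2) ^ (n - j)
      = ∑ j ∈ Finset.range (n + 1), (r ^ 2) ^ j := by
    simpa using Finset.sum_range_reflect (fun j => (r ^ 2) ^ j) (n + 1)
  rw [Finset.sum_congr rfl hterm, Finset.sum_add_distrib, Finset.sum_add_distrib, hreflect,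
    Finset.sum_const, Finset.card_range, nsmul_eq_mul]
  push_cast
  ring

lemma exchangeForm_discrim (hrs : r ^ 2 + s ^ 2 = 1) (hε : ε ^ 2 = 1) :
    (n + 2) * (1 + ε * r ^ (n + 2)) * (1 - ε * (r ^ (n + 2) - (n + 1) * r ^ n * s ^ 2))
        - (ε * ((n + 2) * s * r ^ (n + 1))) ^ 2
      = (n + 2) * s ^ 2 / 2 * ∑ j ∈ Finset.range (n + 1), (r ^ j + ε * r ^ (n - j)) ^ 2 := by
  have hgeom : (∑ j ∈ Finset.range (n + 1), (r ^ 2) ^ j) * s ^ 2 = 1 - (r ^ 2) ^ (n + 1) := by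
    rw [← geom_sum_mul_neg, ← hrs, add_sub_cancel_left]
  rw [sum_range_pow_add_mul_pow_sq n r hε]
  have hs : s ^ 2 = 1 - r ^ 2 := by linarith
  rw [mul_pow ε, hε, mul_pow, mul_pow]
  have hcross : ((1 : ℝ) + ε * r ^ (n + 2)) * (1 - ε * (r ^ (n + 2) - (n + 1) * r ^ n * s ^ 2))
      = 1 - (r ^ (n + 2)) ^ 2 + (n + 1) * r ^ n * s ^ 2 * (ε + r ^ (n + 2)) := by
    linear_combination (-(r ^ (n + 2)) ^ 2 + (n + 1) * r ^ n * s ^ 2 * r ^ (n + 2)) * hε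
  rw [mul_assoc ((n : ℝ) + 2), hcross]
  linear_combination -(n + 2) * hgeom - (n + 2) * (r ^ 2) ^ (n + 1) * hs

lemma abs_lt_one_of_sq_add_sq_eq_one (hrs : r ^ 2 + s ^ 2 = 1) (hs : s ≠ 0) : |r| < 1 := by
  rw [← sq_lt_one_iff_abs_lt_one]
  have := pow_pos (abs_pos.2 hs) 2
  rw [sq_abs] at this
  linarith

lemma exchangeForm_nonneg (hrs : r ^ 2 + s ^ 2 = 1) (hs : s ≠ 0) (hε : ε ^ 2 = 1) (X Y : ℝ) :
    0 ≤ exchangeForm n ε r s X Y := by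
  have hpos := one_add_mul_pow_pos hε (abs_lt_one_of_sq_add_sq_eq_one hrs hs) (n + 1).succ_ne_zero
  refine binaryForm_nonneg (by positivity) ?_ X Y
  rw [exchangeForm_discrim hrs hε]
  exact mul_nonneg (by positivity) (Finset.sum_nonneg fun _ _ => sq_nonneg _)

lemma eq_zero_of_exchangeForm_eq_zero (hn : n ≠ 0) (hrs : r ^ 2 + s ^ 2 = 1) (hs : s ≠ 0)
    (hε : ε ^ 2 = 1) {X Y : ℝ} (h0 : exchangeForm n ε r s X Y = 0) : X = 0 ∧ Y = 0 := by
  have hr := abs_lt_one_of_sq_add_sq_eq_one hrs hs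
  have hpos := one_add_mul_pow_pos hε hr (n + 1).succ_ne_zero
  refine eq_zero_of_binaryForm_eq_zero (by positivity) ?_ h0
  rw [exchangeForm_discrim hrs hε]
  refine mul_pos (by positivity) (Finset.sum_pos' (fun _ _ => sq_nonneg _) ⟨0, by simp, ?_⟩)
  have hpos' := one_add_mul_pow_pos hε hr hn
  simpa using pow_pos hpos' 2

lemma eq_zero_of_exchangeForm_zero_right (hrs : r ^ 2 + s ^ 2 = 1) (hs : s ≠ 0)
    (hε : ε ^ 2 = 1) {X : ℝ} (h0 : exchangeForm n ε r s X 0 = 0) : X = 0 := by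
  have hpos := one_add_mul_pow_pos hε (abs_lt_one_of_sq_add_sq_eq_one hrs hs) (n + 1).succ_ne_zero
  have hcoeff : ((n : ℝ) + 2) * (1 + ε * r ^ (n + 2)) ≠ 0 := by positivity
  simpa [exchangeForm, hcoeff] using h0

end ExchangeForm

/-! ### Symmetric tensors `x^(n+1) · ξ` -/

section PowInner

variable {V : Type*} [NormedAddCommGroup V] [InnerProductSpace ℝ V]

/-- `n + 2` times the inner product of the symmetric tensors `x^(n+1) · ξ` and `y^(n+1) · η`. -/
def powInner (n : ℕ) (x ξ y η : V) : ℝ :=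
  ⟪x, y⟫_ℝ ^ (n + 1) * ⟪ξ, η⟫_ℝ + (n + 1) * ⟪x, y⟫_ℝ ^ n * ⟪ξ, y⟫_ℝ * ⟪x, η⟫_ℝ

/-- `n + 2` times the squared norm of the symmetric tensor `x^(n+1) · ξ + y^(n+1) · η`. -/
def powNormSq (n : ℕ) (x ξ y η : V) : ℝ :=
  powInner n x ξ x ξ + 2 * powInner n x ξ y η + powInner n y η y η

end PowInner

section PowNormSqPlane

variable {n : ℕ} {x y : ℂ}

lemma inner_mul_mul (α β x y : ℂ) :
    ⟪α * x, β * y⟫_ℝ = (conj α * β).re * ⟪x, y⟫_ℝ - (conj α * β).im * (conj x * y).im := by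
  simp only [Complex.inner, Complex.mul_re, Complex.mul_im, Complex.conj_re, Complex.conj_im,
    map_mul]
  ring

lemma two_mul_powNormSq (n : ℕ) {x y α β : ℂ} {r s : ℝ} (hr : ⟪x, y⟫_ℝ = ‖x‖ * ‖y‖ * r)
    (hs : (conj x * y).im = ‖x‖ * ‖y‖ * s) :
    2 * powNormSq n x (α * x) y (β * y)
      = exchangeForm n 1 r s (‖x‖ ^ (n + 2) * α.re + ‖y‖ ^ (n + 2) * β.re)
          (‖x‖ ^ (n + 2) * α.im - ‖y‖ ^ (n + 2) * β.im)
        + exchangeForm n (-1) r s (‖x‖ ^ (n + 2) * α.re - ‖y‖ ^ (n + 2) * β.re)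
          (‖x‖ ^ (n + 2) * α.im + ‖y‖ ^ (n + 2) * β.im) := by
  have himself (w : ℂ) : (conj w * w).im = 0 := by simp [mul_comm]
  have hleft (β x y : ℂ) : ⟪x, β * y⟫_ℝ = β.re * ⟪x, y⟫_ℝ - β.im * (conj x * y).im := by
    simpa using inner_mul_mul 1 β x y
  have hright (α x y : ℂ) : ⟪α * x, y⟫_ℝ = α.re * ⟪x, y⟫_ℝ + α.im * (conj x * y).im := by
    simpa using inner_mul_mul α 1 x y
  simp only [powNormSq, powInner, inner_mul_mul]
  simp only [hleft, hright, himself, hr, hs, real_inner_self_eq_norm_sq, exchangeForm,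
    Complex.mul_re, Complex.mul_im, Complex.conj_re, Complex.conj_im]
  ring

lemma exists_cos_sin_angle (hxy : (conj x * y).im ≠ 0) :
    ∃ r s : ℝ, r ^ 2 + s ^ 2 = 1 ∧ s ≠ 0 ∧ ⟪x, y⟫_ℝ = ‖x‖ * ‖y‖ * r ∧
      (conj x * y).im = ‖x‖ * ‖y‖ * s := by
  have hnorm : ‖conj x * y‖ = ‖x‖ * ‖y‖ := by simp
  have him : (conj x * y).im = ‖x‖ * ‖y‖ * Real.sin (conj x * y).arg := by
    rw [← hnorm, Complex.norm_mul_sin_arg]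
  refine ⟨Real.cos (conj x * y).arg, Real.sin (conj x * y).arg, Real.cos_sq_add_sin_sq _, ?_, ?_,
    him⟩
  · intro hsin
    rw [him, hsin, mul_zero] at hxy
    exact hxy rfl
  · rw [← hnorm, Complex.norm_mul_cos_arg, Complex.inner, mul_comm]

lemma left_ne_zero_of_conj_mul_im_ne_zero (hxy : (conj x * y).im ≠ 0) : x ≠ 0 := by
  rintro rfl; simp at hxy

lemma right_ne_zero_of_conj_mul_im_ne_zero (hxy : (conj x * y).im ≠ 0) : y ≠ 0 := by
  rintro rfl; simp at hxy

lemma powNormSq_nonneg (hxy : (conj x * y).im ≠ 0) (ξ η : ℂ) : 0 ≤ powNormSq n x ξ y η := by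
  obtain ⟨r, s, hrs, hs0, hr, hs⟩ := exists_cos_sin_angle hxy
  rw [← div_mul_cancel₀ ξ (left_ne_zero_of_conj_mul_im_ne_zero hxy),
    ← div_mul_cancel₀ η (right_ne_zero_of_conj_mul_im_ne_zero hxy)]
  refine nonneg_of_mul_nonneg_right ?_ (zero_lt_two' ℝ)
  rw [two_mul_powNormSq n hr hs]
  exact add_nonneg (exchangeForm_nonneg hrs hs0 (by norm_num) _ _)
    (exchangeForm_nonneg hrs hs0 (by norm_num) _ _)

lemma exists_exchangeForm_eq_zero (hxy : (conj x * y).im ≠ 0) {α β : ℂ}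
    (h0 : powNormSq n x (α * x) y (β * y) = 0) :
    ∃ r s : ℝ, r ^ 2 + s ^ 2 = 1 ∧ s ≠ 0 ∧
      exchangeForm n 1 r s (‖x‖ ^ (n + 2) * α.re + ‖y‖ ^ (n + 2) * β.re)
        (‖x‖ ^ (n + 2) * α.im - ‖y‖ ^ (n + 2) * β.im) = 0 ∧
      exchangeForm n (-1) r s (‖x‖ ^ (n + 2) * α.re - ‖y‖ ^ (n + 2) * β.re)
        (‖x‖ ^ (n + 2) * α.im + ‖y‖ ^ (n + 2) * β.im) = 0 := by
  obtain ⟨r, s, hrs, hs0, hr, hs⟩ := exists_cos_sin_angle hxy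
  have hsum := two_mul_powNormSq n (α := α) (β := β) hr hs
  rw [h0, mul_zero, eq_comm, add_eq_zero_iff_of_nonneg
    (exchangeForm_nonneg hrs hs0 (by norm_num) _ _)
    (exchangeForm_nonneg hrs hs0 (by norm_num) _ _)] at hsum
  exact ⟨r, s, hrs, hs0, hsum⟩

lemma eq_zero_of_add_eq_zero_of_sub_eq_zero {a b : ℝ} (hadd : a + b = 0) (hsub : a - b = 0) :
    a = 0 ∧ b = 0 :=
  ⟨by linarith, by linarith⟩

lemma eq_zero_of_powNormSq_eq_zero (hn : n ≠ 0) (hxy : (conj x * y).im ≠ 0) {ξ η : ℂ}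
    (h0 : powNormSq n x ξ y η = 0) : ξ = 0 ∧ η = 0 := by
  have hx := left_ne_zero_of_conj_mul_im_ne_zero hxy
  have hy := right_ne_zero_of_conj_mul_im_ne_zero hxy
  obtain ⟨α, rfl⟩ : ∃ α, ξ = α * x := ⟨ξ / x, (div_mul_cancel₀ ξ hx).symm⟩
  obtain ⟨β, rfl⟩ : ∃ β, η = β * y := ⟨η / y, (div_mul_cancel₀ η hy).symm⟩
  obtain ⟨r, s, hrs, hs, hsymm, hanti⟩ := exists_exchangeForm_eq_zero hxy h0
  obtain ⟨hre_add, him_sub⟩ := eq_zero_of_exchangeForm_eq_zero hn hrs hs (by norm_num) hsymm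
  obtain ⟨hre_sub, him_add⟩ := eq_zero_of_exchangeForm_eq_zero hn hrs hs (by norm_num) hanti
  have hre := eq_zero_of_add_eq_zero_of_sub_eq_zero hre_add hre_sub
  have him := eq_zero_of_add_eq_zero_of_sub_eq_zero him_add him_sub
  simp only [mul_eq_zero, pow_eq_zero_iff', norm_eq_zero, hx, hy, false_and, false_or] at hre him
  simp [Complex.ext_iff (z := α), Complex.ext_iff (z := β), hre, him]

lemma eq_zero_of_powNormSq_smul_eq_zero (hxy : (conj x * y).im ≠ 0) {a b : ℝ}
    (h0 : powNormSq n x (a • x) y (b • y) = 0) : a = 0 ∧ b = 0 := by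
  have hx := left_ne_zero_of_conj_mul_im_ne_zero hxy
  have hy := right_ne_zero_of_conj_mul_im_ne_zero hxy
  rw [Complex.real_smul, Complex.real_smul] at h0
  obtain ⟨r, s, hrs, hs, hsymm, hanti⟩ := exists_exchangeForm_eq_zero hxy h0
  simp only [Complex.ofReal_im, mul_zero, sub_zero, add_zero] at hsymm hanti
  have hadd := eq_zero_of_exchangeForm_zero_right hrs hs (by norm_num) hsymm
  have hsub := eq_zero_of_exchangeForm_zero_right hrs hs (by norm_num) hanti
  simpa [hx, hy] using eq_zero_of_add_eq_zero_of_sub_eq_zero hadd hsub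

end PowNormSqPlane

/-! ### Jets -/

/-- The first-order jet functional `H ↦ val * H(base) + ∂_dir H(base)`. -/
structure Jet (V : Type*) where
  base : V
  val : ℝ
  dir : V

namespace Jet

variable {V : Type*} [NormedAddCommGroup V] [InnerProductSpace ℝ V]

/-- The covariance of two jets of a centred Gaussian field with covariance `F ⟪x, y⟫`; the functions
`D` and `E` stand for the first two derivatives of `F`. -/
def cov (F D E : ℝ → ℝ) (j k : Jet V) : ℝ :=
  j.val * k.val * F ⟪j.base, k.base⟫_ℝ
    + (j.val * ⟪j.base, k.dir⟫_ℝ + k.val * ⟪j.dir, k.base⟫_ℝ + ⟪j.dir, k.dir⟫_ℝ)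
      * D ⟪j.base, k.base⟫_ℝ
    + ⟪j.dir, k.base⟫_ℝ * ⟪j.base, k.dir⟫_ℝ * E ⟪j.base, k.base⟫_ℝ

/-- The variance of the sum of two jets of the field of `Jet.cov`. -/
def varAdd (F D E : ℝ → ℝ) (j k : Jet V) : ℝ :=
  cov F D E j j + 2 * cov F D E j k + cov F D E k k

/-- The vector `ξ` for which the jet acts on homogeneous polynomials of degree `n + 2` as the
symmetric tensor `x^(n+1) · ξ`, scaled by `n + 2`. -/
def tensorDir (n : ℕ) (j : Jet V) : V :=
  j.val • j.base + ((n : ℝ) + 2) • j.dir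

lemma mul_cov_pow (n : ℕ) (j k : Jet V) :
    (n + 2) * cov (· ^ (n + 2)) (fun t => (n + 2) * t ^ (n + 1))
        (fun t => (n + 2) * (n + 1) * t ^ n) j k
      = powInner n j.base (j.tensorDir n) k.base (k.tensorDir n) := by
  simp only [cov, powInner, tensorDir, inner_add_left, inner_add_right, real_inner_smul_left,
    real_inner_smul_right]
  ring

lemma varAdd_pow (n : ℕ) (j k : Jet V) :
    varAdd (· ^ (n + 2)) (fun t => (n + 2) * t ^ (n + 1)) (fun t => (n + 2) * (n + 1) * t ^ n) j k
      = powNormSq n j.base (j.tensorDir n) k.base (k.tensorDir n) / (n + 2) := by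
  rw [eq_div_iff (by positivity), varAdd, powNormSq, ← mul_cov_pow, ← mul_cov_pow, ← mul_cov_pow]
  ring

end Jet

/-! ### The series `ν`, `ν′`, `ν″` on `[-1, 1]` -/

section Series

variable {γ : ℕ → ℝ} {t : ℝ}

lemma GammaDecay.summable_sq_mul_sq (hγ : GammaDecay γ) :
    Summable fun p : ℕ => γ p ^ 2 * (p : ℝ) ^ 2 := by
  obtain ⟨hnonneg, ρ, hρ, hρ1, hle⟩ := hγ
  have hgeom := summable_pow_mul_geometric_of_norm_lt_one (R := ℝ) 2 (r := ρ ^ 2)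
    (by rw [Real.norm_of_nonneg (by positivity)]; exact pow_lt_one₀ hρ.le hρ1 two_ne_zero)
  refine Summable.of_norm_bounded_eventually_nat hgeom ?_
  filter_upwards [hle] with p hp
  have hp0 := hnonneg p
  rw [Real.norm_of_nonneg (by positivity), mul_comm, pow_right_comm]
  gcongr

lemma hasSum_add_two_of_abs_le {b f : ℕ → ℝ} (hb : Summable b)
    (hf : ∀ n, |f (n + 2)| ≤ b (n + 2)) :
    HasSum (fun n => f (n + 2)) (∑' p, if 2 ≤ p then f p else 0) := by
  have hshift : Summable fun n => f (n + 2) :=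
    Summable.of_norm_bounded ((summable_nat_add_iff 2).2 hb) hf
  have hite : Summable fun p => if 2 ≤ p then f p else 0 :=
    (summable_nat_add_iff 2).1 (by simpa using hshift)
  simpa [Finset.sum_range_succ] using (hasSum_nat_add_iff' 2).2 hite.hasSum

lemma abs_mul_pow_le {c b : ℝ} (hc : 0 ≤ c) (hcb : c ≤ b) (ht : |t| ≤ 1) (m : ℕ) :
    |c * t ^ m| ≤ b := by
  rw [abs_mul, abs_pow, abs_of_nonneg hc]
  exact (mul_le_of_le_one_right hc (pow_le_one₀ (abs_nonneg t) ht)).trans hcb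

lemma hasSum_nuF (hγ : Summable fun p : ℕ => γ p ^ 2 * (p : ℝ) ^ 2) (ht : |t| ≤ 1) :
    HasSum (fun n : ℕ => γ (n + 2) ^ 2 * t ^ (n + 2)) (nuF γ t) := by
  refine hasSum_add_two_of_abs_le hγ fun n => abs_mul_pow_le (sq_nonneg _) ?_ ht _
  have hone : (1 : ℝ) ≤ ((n + 2 : ℕ) : ℝ) := by exact_mod_cast Nat.le_add_left 1 (n + 1)
  exact le_mul_of_one_le_right (sq_nonneg _) (one_le_pow₀ hone)

lemma hasSum_nuD1 (hγ : Summable fun p : ℕ => γ p ^ 2 * (p : ℝ) ^ 2) (ht : |t| ≤ 1) :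
    HasSum (fun n : ℕ => γ (n + 2) ^ 2 * ((n + 2) * t ^ (n + 1))) (nuD1 γ t) := by
  have hsum := hasSum_add_two_of_abs_le (f := fun p => γ p ^ 2 * p * t ^ (p - 1)) hγ fun n =>
    abs_mul_pow_le (by positivity) (by gcongr; push_cast; nlinarith) ht _
  simpa [nuD1, mul_assoc] using hsum

lemma hasSum_nuD2 (hγ : Summable fun p : ℕ => γ p ^ 2 * (p : ℝ) ^ 2) (ht : |t| ≤ 1) :
    HasSum (fun n : ℕ => γ (n + 2) ^ 2 * ((n + 2) * (n + 1) * t ^ n)) (nuD2 γ t) := by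
  have hcoeff (n : ℕ) : ((n + 2 : ℕ) : ℝ) - 1 = n + 1 := by push_cast; ring
  have hsum := hasSum_add_two_of_abs_le (f := fun p => γ p ^ 2 * p * ((p : ℝ) - 1) * t ^ (p - 2))
    hγ fun n => abs_mul_pow_le (by rw [hcoeff]; positivity)
      (by rw [hcoeff, mul_assoc]; gcongr; push_cast; nlinarith) ht _
  refine hsum.congr_fun fun n => ?_
  rw [hcoeff, Nat.add_sub_cancel]
  push_cast
  ring

lemma Mixed.exists_add_two (hmix : Mixed γ) :
    ∃ n m : ℕ, n ≠ 0 ∧ n ≠ m ∧ γ (n + 2) ≠ 0 ∧ γ (m + 2) ≠ 0 := by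
  obtain ⟨p, q, hp, hq, hpq, hγp, hγq⟩ := hmix
  obtain ⟨n, rfl⟩ := Nat.exists_eq_add_of_le' hp
  obtain ⟨m, rfl⟩ := Nat.exists_eq_add_of_le' hq
  rcases eq_or_ne n 0 with rfl | hn
  · exact ⟨m, 0, by omega, by omega, hγq, hγp⟩
  · exact ⟨n, m, hn, by omega, hγp, hγq⟩

end Series

/-! ### Nondegeneracy of jets of the mixed field -/

namespace Jet

variable {V : Type*} [NormedAddCommGroup V] [InnerProductSpace ℝ V] {γ : ℕ → ℝ}

lemma hasSum_cov (hγ : Summable fun p : ℕ => γ p ^ 2 * (p : ℝ) ^ 2) {j k : Jet V}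
    (hj : ‖j.base‖ ≤ 1) (hk : ‖k.base‖ ≤ 1) :
    HasSum (fun n : ℕ => γ (n + 2) ^ 2 * cov (· ^ (n + 2)) (fun t => (n + 2) * t ^ (n + 1))
      (fun t => (n + 2) * (n + 1) * t ^ n) j k) (cov (nuF γ) (nuD1 γ) (nuD2 γ) j k) := by
  have ht : |⟪j.base, k.base⟫_ℝ| ≤ 1 :=
    (abs_real_inner_le_norm _ _).trans (mul_le_one₀ hj (norm_nonneg _) hk)
  have hsum := (((hasSum_nuF hγ ht).mul_left (j.val * k.val)).add
    ((hasSum_nuD1 hγ ht).mul_left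
      (j.val * ⟪j.base, k.dir⟫_ℝ + k.val * ⟪j.dir, k.base⟫_ℝ + ⟪j.dir, k.dir⟫_ℝ))).add
    ((hasSum_nuD2 hγ ht).mul_left (⟪j.dir, k.base⟫_ℝ * ⟪j.base, k.dir⟫_ℝ))
  refine hsum.congr_fun fun n => ?_
  simp only [cov]
  ring

lemma hasSum_varAdd (hγ : Summable fun p : ℕ => γ p ^ 2 * (p : ℝ) ^ 2) {j k : Jet V}
    (hj : ‖j.base‖ ≤ 1) (hk : ‖k.base‖ ≤ 1) :
    HasSum (fun n : ℕ => γ (n + 2) ^ 2 *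
        (powNormSq n j.base (j.tensorDir n) k.base (k.tensorDir n) / (n + 2)))
      (varAdd (nuF γ) (nuD1 γ) (nuD2 γ) j k) := by
  have hsum := ((hasSum_cov hγ hj hj).add ((hasSum_cov hγ hj hk).mul_left 2)).add
    (hasSum_cov hγ hk hk)
  refine hsum.congr_fun fun n => ?_
  rw [← varAdd_pow, varAdd]
  ring

lemma tensorDir_eq_smul_base {n : ℕ} {j : Jet V} (h : j.tensorDir n = 0) (m : ℕ) :
    j.tensorDir m = (j.val * (n - m) / (n + 2)) • j.base := by
  have hn : (n : ℝ) + 2 ≠ 0 := by positivity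
  have hdir : j.dir = (-(j.val / (n + 2))) • j.base := by
    rw [neg_smul, eq_neg_iff_add_eq_zero, add_comm, ← smul_right_inj hn, smul_zero, smul_add,
      smul_smul, mul_div_cancel₀ _ hn]
    exact h
  rw [tensorDir, hdir, smul_smul, ← add_smul]
  congr 1
  field_simp
  ring

lemma eq_zero_of_tensorDir_eq_zero {n m : ℕ} (hnm : n ≠ m) {j : Jet V} (hn : j.tensorDir n = 0)
    (hm : j.val * (n - m) / (n + 2) = 0) : j.val = 0 ∧ j.dir = 0 := by
  have hn2 : (n : ℝ) + 2 ≠ 0 := by positivity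
  have hnm' : (n : ℝ) - m ≠ 0 := sub_ne_zero.2 (Nat.cast_injective.ne hnm)
  have hval : j.val = 0 := by simpa [hn2, hnm'] using hm
  exact ⟨hval, by simpa [tensorDir, hval, hn2] using hn⟩

lemma varAdd_pos (hγ : Summable fun p : ℕ => γ p ^ 2 * (p : ℝ) ^ 2) (hmix : Mixed γ)
    {j k : Jet ℂ} (hj : ‖j.base‖ ≤ 1) (hk : ‖k.base‖ ≤ 1) (hjk : (conj j.base * k.base).im ≠ 0)
    (hne : ¬((j.val = 0 ∧ j.dir = 0) ∧ k.val = 0 ∧ k.dir = 0)) :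
    0 < varAdd (nuF γ) (nuD1 γ) (nuD2 γ) j k := by
  have hnonneg (n : ℕ) : 0 ≤ γ (n + 2) ^ 2 *
      (powNormSq n j.base (j.tensorDir n) k.base (k.tensorDir n) / (n + 2)) :=
    mul_nonneg (sq_nonneg _) (div_nonneg (powNormSq_nonneg hjk _ _) (by positivity))
  have hsum := hasSum_varAdd hγ hj hk
  refine (hsum.nonneg hnonneg).lt_of_ne' fun hzero => hne ?_
  rw [hzero, hasSum_zero_iff_of_nonneg hnonneg] at hsum
  have hterm {n : ℕ} (hn : γ (n + 2) ≠ 0) :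
      powNormSq n j.base (j.tensorDir n) k.base (k.tensorDir n) = 0 := by
    have hn2 : (n : ℝ) + 2 ≠ 0 := by positivity
    simpa [hn, hn2] using congrFun hsum n
  obtain ⟨n, m, hn, hnm, hγn, hγm⟩ := hmix.exists_add_two
  obtain ⟨hjn, hkn⟩ := eq_zero_of_powNormSq_eq_zero hn hjk (hterm hγn)
  have hm := hterm hγm
  rw [tensorDir_eq_smul_base hjn, tensorDir_eq_smul_base hkn] at hm
  obtain ⟨hjm, hkm⟩ := eq_zero_of_powNormSq_smul_eq_zero hjk hm
  exact ⟨eq_zero_of_tensorDir_eq_zero hnm hjn hjm, eq_zero_of_tensorDir_eq_zero hnm hkn hkm⟩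

lemma cov_self_pos (hγ : Summable fun p : ℕ => γ p ^ 2 * (p : ℝ) ^ 2) (hmix : Mixed γ)
    {j : Jet ℂ} (hj : ‖j.base‖ ≤ 1) (hj0 : j.base ≠ 0) (hne : ¬(j.val = 0 ∧ j.dir = 0)) :
    0 < cov (nuF γ) (nuD1 γ) (nuD2 γ) j j := by
  have him : (conj j.base * (Complex.I * j.base)).im ≠ 0 := by
    rw [mul_left_comm, Complex.conj_mul']
    simpa [← Complex.ofReal_pow] using hj0
  have hpos := varAdd_pos hγ hmix (k := ⟨Complex.I * j.base, 0, 0⟩) hj (by simpa using hj) him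
    fun h => hne h.1
  simpa [varAdd, cov] using hpos

end Jet

/-! ### Positive definiteness of the covariance matrices -/

lemma posDef_schurComplement {K m n : Type*} [Field K] [PartialOrder K] [StarRing K] [Finite m]
    [Fintype n] [DecidableEq n] {A : Matrix m m K} {B : Matrix m n K} {D : Matrix n n K}
    (h : (fromBlocks A B Bᴴ D).PosDef) : (A - B * D⁻¹ * Bᴴ).PosDef := by
  have := Fintype.ofFinite m
  have hD : D.PosDef := h.submatrix Sum.inr_injective
  have : Invertible D := hD.isUnit.invertible
  refine .of_dotProduct_mulVec_pos ((IsHermitian.fromBlocks₂₂ A B hD.isHermitian).1 h.isHermitian)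
    fun x hx => ?_
  have hne : Sum.elim x (-((D⁻¹ * Bᴴ) *ᵥ x)) ≠ 0 := fun h0 =>
    hx (funext fun i => congrFun h0 (Sum.inl i))
  have hpos := h.dotProduct_mulVec_pos hne
  rw [dotProduct_mulVec, schur_complement_eq₂₂ A B _ _ hD.isHermitian, add_neg_cancel] at hpos
  simpa [dotProduct_mulVec] using hpos

section JointCovariance

variable {γ : ℕ → ℝ} {r s q q1 q2 : ℝ}

/-- The covariance matrix of the tangential derivatives at two points of radii `q1` and `q2` with
overlap `r`. -/
def gradCov (γ : ℕ → ℝ) (r q1 q2 : ℝ) : Matrix (Fin 2) (Fin 2) ℝ :=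
  !![nuD1 γ (q1 ^ 2), dA γ r q1 q2; dA γ r q1 q2, nuD1 γ (q2 ^ 2)]

/-- The unconditional covariance matrix of the two values and the two radial derivatives. -/
def valRadialCov (γ : ℕ → ℝ) (r q1 q2 : ℝ) : Matrix (Fin 2 ⊕ Fin 2) (Fin 2 ⊕ Fin 2) ℝ :=
  let t := q1 * q2 * r
  let B := !![q1 * nuD1 γ (q1 ^ 2), q1 * r * nuD1 γ t; q2 * r * nuD1 γ t, q2 * nuD1 γ (q2 ^ 2)]
  fromBlocks !![nuF γ (q1 ^ 2), nuF γ t; nuF γ t, nuF γ (q2 ^ 2)] B Bᵀ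
    !![q1 ^ 2 * nuD2 γ (q1 ^ 2) + nuD1 γ (q1 ^ 2), q1 * q2 * r ^ 2 * nuD2 γ t + r * nuD1 γ t;
       q1 * q2 * r ^ 2 * nuD2 γ t + r * nuD1 γ t, q2 ^ 2 * nuD2 γ (q2 ^ 2) + nuD1 γ (q2 ^ 2)]

/-- The covariances of the values and radial derivatives (rows) with the tangential derivatives
(columns), where `s` is the sine of the oriented angle with cosine `r` between the two points. -/
def crossCov (γ : ℕ → ℝ) (r s q1 q2 : ℝ) : Matrix (Fin 2 ⊕ Fin 2) (Fin 2) ℝ :=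
  fromRows
    !![0, -(q1 * s * nuD1 γ (q1 * q2 * r)); q2 * s * nuD1 γ (q1 * q2 * r), 0]
    !![0, -(s * ups γ r q1 q2); s * ups γ r q1 q2, 0]

/-- The joint covariance matrix of values, radial and tangential derivatives at the two points. -/
def jointCov (γ : ℕ → ℝ) (r s q1 q2 : ℝ) :
    Matrix ((Fin 2 ⊕ Fin 2) ⊕ Fin 2) ((Fin 2 ⊕ Fin 2) ⊕ Fin 2) ℝ :=
  fromBlocks (valRadialCov γ r q1 q2) (crossCov γ r s q1 q2) (crossCov γ r s q1 q2)ᴴ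
    (gradCov γ r q1 q2)

/-- The jet at `q z` with value coefficient `u`, radial derivative coefficient `x` and tangential
derivative coefficient `g`, for a unit vector `z`. -/
def frameJet (q : ℝ) (z : ℂ) (u x g : ℝ) : Jet ℂ :=
  ⟨q * z, u, ⟨x, g⟩ * z⟩

lemma cov_frameJet (F D E : ℝ → ℝ) {z w : ℂ} (hr : ⟪z, w⟫_ℝ = r) (hs : (conj z * w).im = s)
    (u1 x1 g1 u2 x2 g2 : ℝ) :
    Jet.cov F D E (frameJet q1 z u1 x1 g1) (frameJet q2 w u2 x2 g2)
      = u1 * u2 * F (q1 * q2 * r)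
        + (u1 * (q1 * (x2 * r - g2 * s)) + u2 * (q2 * (x1 * r + g1 * s))
            + ((x1 * x2 + g1 * g2) * r - (x1 * g2 - g1 * x2) * s)) * D (q1 * q2 * r)
        + q2 * (x1 * r + g1 * s) * (q1 * (x2 * r - g2 * s)) * E (q1 * q2 * r) := by
  simp only [Jet.cov, frameJet, inner_mul_mul, hr, hs, Complex.conj_ofReal, Complex.mul_re,
    Complex.mul_im, Complex.conj_re, Complex.conj_im, Complex.ofReal_re, Complex.ofReal_im,
    mul_zero, zero_mul, sub_zero, add_zero]
  ring

lemma cov_frameJet_self (F D E : ℝ → ℝ) {z : ℂ} (hz : ‖z‖ = 1) (u x g : ℝ) :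
    Jet.cov F D E (frameJet q z u x g) (frameJet q z u x g)
      = u ^ 2 * F (q ^ 2) + (2 * q * u * x + x ^ 2 + g ^ 2) * D (q ^ 2)
        + q ^ 2 * x ^ 2 * E (q ^ 2) := by
  have hinner : ⟪z, z⟫_ℝ = 1 := by rw [real_inner_self_eq_norm_sq, hz, one_pow]
  have him : (conj z * z).im = 0 := by simp [mul_comm]
  rw [cov_frameJet F D E hinner him, mul_one (q * q), ← sq q]
  ring

lemma frameJet_eq_zero_iff {z : ℂ} (hz : z ≠ 0) {u x g : ℝ} :
    (frameJet q z u x g).val = 0 ∧ (frameJet q z u x g).dir = 0 ↔ u = 0 ∧ x = 0 ∧ g = 0 := by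
  simp [frameJet, hz, Complex.ext_iff (z := (⟨x, g⟩ : ℂ))]

lemma isHermitian_jointCov : (jointCov γ r s q1 q2).IsHermitian := by
  refine IsHermitian.fromBlocks (IsHermitian.fromBlocks ?_ rfl ?_) rfl ?_ <;>
  exact IsHermitian.ext fun i j => by fin_cases i <;> fin_cases j <;> rfl

lemma dotProduct_jointCov_mulVec (hrs : ‖(⟨r, s⟩ : ℂ)‖ = 1) (v : (Fin 2 ⊕ Fin 2) ⊕ Fin 2 → ℝ) :
    v ⬝ᵥ (jointCov γ r s q1 q2 *ᵥ v) = Jet.varAdd (nuF γ) (nuD1 γ) (nuD2 γ)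
      (frameJet q1 1 (v (.inl (.inl 0))) (v (.inl (.inr 0))) (v (.inr 0)))
      (frameJet q2 ⟨r, s⟩ (v (.inl (.inl 1))) (v (.inl (.inr 1))) (v (.inr 1))) := by
  have hs : 1 - r ^ 2 = s ^ 2 := by
    rw [Complex.norm_def, Complex.normSq_mk, Real.sqrt_eq_one] at hrs
    linarith
  rw [Jet.varAdd, cov_frameJet_self _ _ _ norm_one, cov_frameJet_self _ _ _ hrs,
    cov_frameJet (z := 1) (r := r) (s := s) _ _ _ (by simp [Complex.inner]) (by simp)]
  simp only [jointCov, valRadialCov, crossCov, gradCov, dotProduct, mulVec, Fintype.sum_sum_type,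
    Fin.sum_univ_two, dA, ups, hs, conjTranspose_eq_transpose_of_trivial, fromBlocks_apply₁₁,
    fromBlocks_apply₁₂, fromBlocks_apply₂₁, fromBlocks_apply₂₂, fromRows_apply_inl,
    fromRows_apply_inr, transpose_apply, of_apply, cons_val', cons_val_zero, cons_val_one,
    cons_val_fin_one, Fin.isValue]
  ring

lemma posDef_jointCov (hγ : Summable fun p : ℕ => γ p ^ 2 * (p : ℝ) ^ 2) (hmix : Mixed γ)
    (hrs : ‖(⟨r, s⟩ : ℂ)‖ = 1) (hs : s ≠ 0) (hq1 : q1 ∈ Ioc 0 1) (hq2 : q2 ∈ Ioc 0 1) :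
    (jointCov γ r s q1 q2).PosDef := by
  refine .of_dotProduct_mulVec_pos isHermitian_jointCov fun v hv => ?_
  rw [star_trivial, dotProduct_jointCov_mulVec hrs]
  refine Jet.varAdd_pos hγ hmix ?_ ?_ ?_ ?_
  · simpa [frameJet, abs_of_pos hq1.1] using hq1.2
  · simpa [frameJet, hrs, abs_of_pos hq2.1] using hq2.2
  · simp [frameJet, hq1.1.ne', hq2.1.ne', hs]
  · rw [frameJet_eq_zero_iff one_ne_zero, frameJet_eq_zero_iff (norm_ne_zero_iff.1 (by simp [hrs]))]
    rintro ⟨⟨hu1, hx1, hg1⟩, hu2, hx2, hg2⟩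
    refine hv (funext fun i => ?_)
    rcases i with (i | i) | i <;> fin_cases i <;> assumption

lemma dA_comm (γ : ℕ → ℝ) (r q1 q2 : ℝ) : dA γ r q2 q1 = dA γ r q1 q2 := by
  simp only [dA, mul_comm q2 q1]

lemma ups_comm (γ : ℕ → ℝ) (r q1 q2 : ℝ) : ups γ r q2 q1 = ups γ r q1 q2 := by
  simp only [ups, mul_comm q2 q1]

lemma a4_comm (γ : ℕ → ℝ) (r q1 q2 : ℝ) : a4 γ r q2 q1 = a4 γ r q1 q2 := by
  simp only [a4, dA_comm γ r q1 q2, mul_comm (nuD1 γ (q2 ^ 2)) (nuD1 γ (q1 ^ 2))]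

lemma inv_gradCov (γ : ℕ → ℝ) (r q1 q2 : ℝ) :
    (gradCov γ r q1 q2)⁻¹ = !![a2 γ r q1 q2, a4 γ r q1 q2; a4 γ r q1 q2, a2 γ r q2 q1] := by
  rw [gradCov, inv_def, adjugate_fin_two_of, det_fin_two_of, Ring.inverse_eq_inv']
  simp only [smul_of, smul_cons, Matrix.smul_empty, smul_eq_mul, a2, a4, dA_comm γ r q1 q2,
    div_eq_inv_mul, mul_comm (nuD1 γ (q2 ^ 2)) (nuD1 γ (q1 ^ 2)), sq (dA γ r q1 q2)]

lemma sigmaUX_eq_schurComplement (hs : s ^ 2 = 1 - r ^ 2) :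
    SigmaUX γ r q1 q2 = valRadialCov γ r q1 q2
      - crossCov γ r s q1 q2 * (gradCov γ r q1 q2)⁻¹ * (crossCov γ r s q1 q2)ᴴ := by
  rw [inv_gradCov]
  ext i j
  simp only [Matrix.sub_apply, mul_apply, Fin.sum_univ_two, conjTranspose_apply, star_trivial]
  rcases i with i | i <;> rcases j with j | j <;> fin_cases i <;> fin_cases j <;>
    simp only [SigmaUX, SigmaU, SigmaB, SigmaX, valRadialCov, crossCov, ups_comm γ r q1 q2,
      a4_comm γ r q1 q2, ← hs, fromBlocks_apply₁₁, fromBlocks_apply₁₂, fromBlocks_apply₂₁,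
      fromBlocks_apply₂₂, fromRows_apply_inl, fromRows_apply_inr, transpose_apply, of_apply,
      cons_val', cons_val_zero, cons_val_one, cons_val_fin_one, Fin.zero_eta, Fin.mk_one,
      Fin.isValue] <;>
    ring

lemma posDef_sigmaUX (hγ : Summable fun p : ℕ => γ p ^ 2 * (p : ℝ) ^ 2) (hmix : Mixed γ)
    (hr : r ∈ Ioo (-1) 1) (hq1 : q1 ∈ Ioc 0 1) (hq2 : q2 ∈ Ioc 0 1) :
    (SigmaUX γ r q1 q2).PosDef := by
  have hsq : 0 < 1 - r ^ 2 := by nlinarith [hr.1, hr.2]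
  have hs := Real.sq_sqrt hsq.le
  have hrs : ‖(⟨r, √(1 - r ^ 2)⟩ : ℂ)‖ = 1 := by
    rw [Complex.norm_def, Complex.normSq_mk, Real.sqrt_eq_one, ← sq, ← sq, hs, add_sub_cancel]
  rw [sigmaUX_eq_schurComplement hs]
  exact posDef_schurComplement (posDef_jointCov hγ hmix hrs (Real.sqrt_ne_zero'.2 hsq) hq1 hq2)

lemma dotProduct_sigmaQ_mulVec (v : Fin 2 → ℝ) :
    v ⬝ᵥ (SigmaQ γ q *ᵥ v) = Jet.cov (nuF γ) (nuD1 γ) (nuD2 γ)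
      (frameJet q 1 (v 0) (q * v 1) 0) (frameJet q 1 (v 0) (q * v 1) 0) := by
  rw [cov_frameJet_self _ _ _ norm_one]
  simp only [SigmaQ, dotProduct, mulVec, Fin.sum_univ_two, of_apply, cons_val', cons_val_zero,
    cons_val_one, cons_val_fin_one, Fin.isValue]
  ring

lemma posDef_sigmaQ (hγ : Summable fun p : ℕ => γ p ^ 2 * (p : ℝ) ^ 2) (hmix : Mixed γ)
    (hq : q ∈ Ioc 0 1) : (SigmaQ γ q).PosDef := by
  refine .of_dotProduct_mulVec_pos
    (IsHermitian.ext fun i j => by fin_cases i <;> fin_cases j <;> rfl) fun v hv => ?_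
  rw [star_trivial, dotProduct_sigmaQ_mulVec]
  refine Jet.cov_self_pos hγ hmix ?_ ?_ ?_
  · simpa [frameJet, abs_of_pos hq.1] using hq.2
  · simpa [frameJet] using hq.1.ne'
  · rw [frameJet_eq_zero_iff one_ne_zero]
    rintro ⟨hv0, hv1, -⟩
    have hv1 : v 1 = 0 := by simpa [hq.1.ne'] using hv1
    refine hv (funext fun i => ?_)
    fin_cases i <;> assumption

end JointCovariance

theorem sigmaUX_sigmaQ_invertible_posDef_general
    (γ : ℕ → ℝ) (hγ : Summable fun p : ℕ => γ p ^ 2 * (p : ℝ) ^ 2) (hmix : Mixed γ)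
    (r : ℝ) (hr : r ∈ Set.Ioo (-1 : ℝ) 1)
    (q q1 q2 : ℝ) (hq : q ∈ Set.Ioc (0 : ℝ) 1)
    (hq1 : q1 ∈ Set.Ioc (0 : ℝ) 1) (hq2 : q2 ∈ Set.Ioc (0 : ℝ) 1) :
    IsUnit (SigmaUX γ r q1 q2) ∧ (SigmaUX γ r q1 q2).PosDef ∧
      IsUnit (SigmaQ γ q) ∧ (SigmaQ γ q).PosDef := by
  have hUX : (SigmaUX γ r q1 q2).PosDef := posDef_sigmaUX hγ hmix hr hq1 hq2
  have hQ : (SigmaQ γ q).PosDef := posDef_sigmaQ hγ hmix hq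
  exact ⟨hUX.isUnit, hUX, hQ.isUnit, hQ⟩

/-- If ν is not a monomial, then for any r ∈ (−1,1) and
q, q₁, q₂ ∈ (0,1], the matrices Σ_{U,X}(r,q₁,q₂) and Σ_q are invertible, and hence
strictly positive definite. -/
theorem sigmaUX_sigmaQ_invertible_posDef
    (γ : ℕ → ℝ) (hγ : GammaDecay γ) (hnorm : nuF γ 1 = 1) (hmix : Mixed γ)
    (r : ℝ) (hr : r ∈ Set.Ioo (-1 : ℝ) 1)
    (q q1 q2 : ℝ) (hq : q ∈ Set.Ioc (0 : ℝ) 1)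
    (hq1 : q1 ∈ Set.Ioc (0 : ℝ) 1) (hq2 : q2 ∈ Set.Ioc (0 : ℝ) 1) :
    IsUnit (SigmaUX γ r q1 q2) ∧ (SigmaUX γ r q1 q2).PosDef ∧
      IsUnit (SigmaQ γ q) ∧ (SigmaQ γ q).PosDef :=
  sigmaUX_sigmaQ_invertible_posDef_general γ hγ.summable_sq_mul_sq hmix r hr q q1 q2 hq hq1 hq2

end SpinGlass
end
end

section
/- Assume ν satisfies Condition M. Then there exists δ > 0 such that for every q ∈ (1−δ, 1], the function q ↦ E_0(q) is differentiable at q with (d/dq)E_0(q) = x_0(q). -/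
open MeasureTheory ProbabilityTheory Real Filter Set Matrix
open scoped ENNReal

noncomputable section

namespace SpinGlass


/-!
Write `a = ν(1)`, `b = ν′(1)`, `c = ν″(1)`. The ground state energy is the minimum over `k, w > 0`
of the zero-temperature one-step Parisi functional `½ (b k + a w + log ((k + w) / k) / w)`. This
functional is convex in `(k, w)`, so a critical point is a minimizer. When moreover `c k² < 1`,
which is where pure-likeness enters, the tangent bound for `Ω` at `-(c k + k⁻¹) / √c` shows that
`Θ(u, x) ≤ w (u + E) - κ (x + X)²` with `E = a w + b k`, `X = c k + k⁻¹` and `κ > 0`, with equality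
at `(-E, -X)`; hence `E₀ = E` is the minimal value of the functional and `x₀ = X`.

Since the functional is affine in `(a, b)`, the envelope theorem gives `dE₀ = ½ (w da + k db)`.
Rescaling the coefficients by `qᵖ` moves `(a, b)` with velocity `(2 b, 2 (b + c))` at `q = 1`, so
the derivative there is `b w + (b + c) k`, which is `X` by the critical point equation
`b k (k + w) = 1`. Other values of `q` reduce to `q = 1` by rescaling.
-/

/-! ### The logarithmic potential outside the bulk -/

/-- `½ ∫ s in 2..t, √(s² - 4)`: the amount by which `Omega` falls short of the parabola
`x² / 4 - 1 / 2` at distance `t ≥ 2` from the origin. -/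
def edgeRate (t : ℝ) : ℝ := t / 4 * √(t ^ 2 - 4) - arcosh (t / 2)

lemma edgeRate_two : edgeRate 2 = 0 := by norm_num [edgeRate]

lemma Omega_eq_sub_edgeRate {y : ℝ} (hy : 2 ≤ |y|) :
    Omega y = y ^ 2 / 4 - 1 / 2 - edgeRate |y| := by
  unfold Omega
  split_ifs with hy'
  · rw [le_antisymm hy' hy, edgeRate_two, sub_zero]
  · rw [edgeRate, arcosh, sq_abs, div_pow, sq_abs, add_comm (|y| / 2)]
    norm_num

lemma hasDerivAt_edgeRate {t : ℝ} (ht : 2 < t) : HasDerivAt edgeRate (√(t ^ 2 - 4) / 2) t := by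
  have hpos : 0 < t ^ 2 - 4 := by nlinarith
  have hsqrt : √((t / 2) ^ 2 - 1) = √(t ^ 2 - 4) / 2 := by
    rw [show (t / 2) ^ 2 - 1 = (t ^ 2 - 4) / 2 ^ 2 by ring, sqrt_div hpos.le, sqrt_sq zero_le_two]
  have hparabola : HasDerivAt (fun s : ℝ ↦ s ^ 2 - 4) (2 * t) t := by
    simpa using (hasDerivAt_pow 2 t).sub_const 4
  have harcosh : HasDerivAt (fun s : ℝ ↦ arcosh (s / 2)) ((√((t / 2) ^ 2 - 1))⁻¹ * (1 / 2)) t :=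
    (hasDerivAt_arcosh (mem_Ioi.2 (by linarith))).comp t ((hasDerivAt_id t).div_const 2)
  have hproduct := ((hasDerivAt_id t).div_const 4).mul (hparabola.sqrt hpos.ne')
  refine (hproduct.sub harcosh).congr_deriv ?_
  rw [hsqrt]
  have hs : √(t ^ 2 - 4) ≠ 0 := (sqrt_pos.2 hpos).ne'
  simp only [id]
  field_simp
  rw [sq_sqrt hpos.le]
  ring

lemma convexOn_edgeRate : ConvexOn ℝ (Ici 2) edgeRate := by
  refine MonotoneOn.convexOn_of_deriv (convex_Ici 2) ?_ ?_ ?_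
  · have harcosh : ContinuousOn (fun t : ℝ ↦ arcosh (t / 2)) (Ici 2) :=
      continuousOn_arcosh.comp (by fun_prop) fun t ht ↦ by
        rw [mem_Ici] at ht ⊢; linarith
    exact ContinuousOn.sub (by fun_prop) harcosh
  · rw [interior_Ici]
    exact fun t ht ↦ (hasDerivAt_edgeRate ht).differentiableAt.differentiableWithinAt
  · rw [interior_Ici]
    intro t ht s hs hts
    rw [(hasDerivAt_edgeRate ht).deriv, (hasDerivAt_edgeRate hs).deriv]
    have : (2 : ℝ) < t := ht
    gcongr

section JoukowskyParameter

variable {n : ℝ} (hn₀ : 0 < n) (hn₁ : n < 1)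
include hn₀ hn₁

lemma two_lt_add_inv : 2 < n + n⁻¹ := by
  have : n * n⁻¹ = 1 := mul_inv_cancel₀ hn₀.ne'
  nlinarith [(one_lt_inv₀ hn₀).2 hn₁]

lemma sqrt_add_inv_sq_sub_four : √((n + n⁻¹) ^ 2 - 4) = n⁻¹ - n := by
  rw [show (n + n⁻¹) ^ 2 - 4 = (n⁻¹ - n) ^ 2 by field_simp; ring, sqrt_sq]
  linarith [(one_lt_inv₀ hn₀).2 hn₁]

lemma edgeRate_add_inv : edgeRate (n + n⁻¹) = (n⁻¹ ^ 2 - n ^ 2) / 4 + log n := by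
  have hcosh : (n + n⁻¹) / 2 = cosh (-log n) := by
    rw [cosh_neg, cosh_log hn₀]
  rw [edgeRate, sqrt_add_inv_sq_sub_four hn₀ hn₁, hcosh,
    arcosh_cosh (neg_nonneg.2 (log_nonpos hn₀.le hn₁.le))]
  ring

lemma edgeRate_tangent_le {t : ℝ} (ht : 2 ≤ t) :
    edgeRate (n + n⁻¹) + (n⁻¹ - n) / 2 * (t - (n + n⁻¹)) ≤ edgeRate t := by
  have hT := two_lt_add_inv hn₀ hn₁
  have hderiv := hasDerivAt_edgeRate hT
  rw [sqrt_add_inv_sq_sub_four hn₀ hn₁] at hderiv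
  rcases lt_trichotomy t (n + n⁻¹) with hlt | rfl | hgt
  · have := convexOn_edgeRate.slope_le_of_hasDerivAt ht hT.le hlt hderiv
    rw [slope_def_field, div_le_iff₀ (by linarith)] at this
    linarith
  · simp
  · have := convexOn_edgeRate.le_slope_of_hasDerivAt hT.le ht hgt hderiv
    rw [slope_def_field, le_div_iff₀ (by linarith)] at this
    linarith

lemma Omega_neg_add_inv : Omega (-(n + n⁻¹)) = n ^ 2 / 2 - log n := by
  have hT := two_lt_add_inv hn₀ hn₁
  have habs : |-(n + n⁻¹)| = n + n⁻¹ := by rw [abs_neg, abs_of_pos (by linarith)]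
  rw [Omega_eq_sub_edgeRate (hT.le.trans_eq habs.symm), habs, edgeRate_add_inv hn₀ hn₁]
  field_simp
  ring

lemma Omega_le_parabola (y : ℝ) :
    Omega y ≤ n ^ 2 / 2 - log n - n * (y + (n + n⁻¹)) + (y + (n + n⁻¹)) ^ 2 / 4 := by
  have of_edgeRate (t : ℝ) (ht : 2 ≤ t) (hyt : -y ≤ t) :
      y ^ 2 / 4 - 1 / 2 - edgeRate t ≤
        n ^ 2 / 2 - log n - n * (y + (n + n⁻¹)) + (y + (n + n⁻¹)) ^ 2 / 4 := by
    have htangent := edgeRate_tangent_le hn₀ hn₁ ht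
    rw [edgeRate_add_inv hn₀ hn₁] at htangent
    have hslope : 0 ≤ (n⁻¹ - n) / 2 * (t + y) :=
      mul_nonneg (by linarith [(one_lt_inv₀ hn₀).2 hn₁]) (by linarith)
    have : n * n⁻¹ = 1 := mul_inv_cancel₀ hn₀.ne'
    nlinarith
  rcases le_total 2 |y| with hy | hy
  · exact Omega_eq_sub_edgeRate hy ▸ of_edgeRate |y| hy (neg_le_abs y)
  · have hinside : Omega y = y ^ 2 / 4 - 1 / 2 - edgeRate 2 := by
      rw [Omega, if_pos hy, edgeRate_two, sub_zero]
    exact hinside ▸ of_edgeRate 2 le_rfl ((neg_le_abs y).trans hy)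

end JoukowskyParameter

/-! ### The one-step Parisi functional -/

/-- The zero-temperature one-step Parisi functional at Lagrange parameter `k` and breaking
parameter `w`, with `a = ν(1)` and `b = ν′(1)`. -/
def parisi (a b k w : ℝ) : ℝ := (b * k + a * w + log ((k + w) / k) / w) / 2

/-- `(k, w)` is a critical point of `parisi a b` in the open quadrant; the two equations are the
vanishing of `∂ₖ` and `∂_w` with denominators cleared. -/
structure IsParisiCritical (a b k w : ℝ) : Prop where
  k_pos : 0 < k
  w_pos : 0 < w
  stationary_k : b * (k * (k + w)) = 1
  stationary_w : a * w ^ 2 + w / (k + w) = log ((k + w) / k)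

lemma integral_inv_add_mul {k w : ℝ} (hk : 0 < k) (hw : 0 < w) :
    ∫ s in (0 : ℝ)..1, (k + w * s)⁻¹ = log ((k + w) / k) / w := by
  rw [intervalIntegral.integral_comp_add_mul (fun y ↦ y⁻¹) hw.ne', mul_zero, add_zero, mul_one,
    integral_inv_of_pos hk (by positivity), smul_eq_mul, inv_mul_eq_div]

lemma add_mul_pos {k w s : ℝ} (hk : 0 < k) (hw : 0 < w) (hs : s ∈ Icc (0 : ℝ) 1) :
    0 < k + w * s :=
  add_pos_of_pos_of_nonneg hk (mul_nonneg hw.le hs.1)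

lemma continuousOn_inv_add_mul {k w : ℝ} (hk : 0 < k) (hw : 0 < w) :
    ContinuousOn (fun s : ℝ ↦ (k + w * s)⁻¹) (uIcc 0 1) := by
  rw [uIcc_of_le zero_le_one]
  exact ContinuousOn.inv₀ (by fun_prop) fun s hs ↦ (add_mul_pos hk hw hs).ne'

lemma two_mul_inv_sub_le_inv {x y : ℝ} (hx : 0 < x) (hy : 0 < y) :
    2 * x⁻¹ - y * x⁻¹ ^ 2 ≤ y⁻¹ := by
  have hgap : y⁻¹ - (2 * x⁻¹ - y * x⁻¹ ^ 2) = y⁻¹ * (1 - y * x⁻¹) ^ 2 := by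
    field_simp
    ring
  rw [← sub_nonneg, hgap]
  positivity

namespace IsParisiCritical

variable {a b k w : ℝ} (h : IsParisiCritical a b k w)
include h

lemma b_eq : b = (k * (k + w))⁻¹ := eq_inv_of_mul_eq_one_left h.stationary_k

lemma parisi_eq : parisi a b k w = a * w + b * k := by
  have := h.k_pos
  have := h.w_pos
  rw [parisi, ← h.stationary_w, h.b_eq]
  field_simp
  ring

lemma integral_linear_mul_inv_sq (l v : ℝ) :
    ∫ s in (0 : ℝ)..1, (l + v * s) * (k + w * s)⁻¹ ^ 2 = b * l + a * v := by
  have hk := h.k_pos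
  have hw := h.w_pos
  let F : ℝ → ℝ := fun s ↦ v / w ^ 2 * log (k + w * s) - (l * w - v * k) / w ^ 2 * (k + w * s)⁻¹
  have hF (s : ℝ) (hs : s ∈ uIcc 0 1) :
      HasDerivAt F ((l + v * s) * (k + w * s)⁻¹ ^ 2) s := by
    have hpos := add_mul_pos hk hw (uIcc_of_le (zero_le_one' ℝ) ▸ hs)
    have hline : HasDerivAt (fun s ↦ k + w * s) w s := by
      simpa using ((hasDerivAt_id s).const_mul w).const_add k
    refine (((hline.log hpos.ne').const_mul _).sub
      ((hline.fun_inv hpos.ne').const_mul _)).congr_deriv ?_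
    field_simp
    ring
  have hint : ContinuousOn (fun s : ℝ ↦ (l + v * s) * (k + w * s)⁻¹ ^ 2) (uIcc 0 1) :=
    ContinuousOn.mul (by fun_prop) ((continuousOn_inv_add_mul hk hw).pow 2)
  have ha : a = (log (k + w) - log k - w / (k + w)) / w ^ 2 := by
    rw [← log_div (by positivity) hk.ne', ← h.stationary_w]
    field_simp
    ring
  rw [intervalIntegral.integral_eq_sub_of_hasDerivAt hF hint.intervalIntegrable, ha, h.b_eq]
  simp only [F, mul_one, mul_zero, add_zero]
  field_simp
  ring

/-- `(k, w) ↦ log ((k + w) / k) / w = ∫₀¹ (k + w s)⁻¹ ds` is convex, so critical points are global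
minimizers; the pointwise inequality integrated here is the tangent line of `y ↦ y⁻¹`. -/
lemma parisi_le {l v : ℝ} (hl : 0 < l) (hv : 0 < v) : parisi a b k w ≤ parisi a b l v := by
  have hk := h.k_pos
  have hw := h.w_pos
  have hinv := (continuousOn_inv_add_mul hk hw).intervalIntegrable (μ := volume)
  have hlin : IntervalIntegrable (fun s : ℝ ↦ (l + v * s) * (k + w * s)⁻¹ ^ 2) volume 0 1 :=
    (ContinuousOn.mul (by fun_prop)
      ((continuousOn_inv_add_mul hk hw).pow 2)).intervalIntegrable
  have hmono := intervalIntegral.integral_mono_on zero_le_one ((hinv.const_mul 2).sub hlin)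
    (continuousOn_inv_add_mul hl hv).intervalIntegrable fun s hs ↦
      two_mul_inv_sub_le_inv (add_mul_pos hk hw hs) (add_mul_pos hl hv hs)
  rw [intervalIntegral.integral_sub (hinv.const_mul 2) hlin, intervalIntegral.integral_const_mul,
    h.integral_linear_mul_inv_sq, integral_inv_add_mul hk hw, integral_inv_add_mul hl hv] at hmono
  have hval := h.parisi_eq
  rw [parisi] at hval ⊢
  rw [parisi]
  linarith

end IsParisiCritical

/-- The value of `ν(1) / ν′(1)` for which the one-step Parisi functional has a critical point with
`w = z * k`. -/
def critRatio (z : ℝ) : ℝ := ((1 + z) * log (1 + z) - z) / z ^ 2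

lemma isParisiCritical_of_critRatio_eq {a b z : ℝ} (hb : 0 < b) (hz : 0 < z)
    (h : critRatio z = a / b) :
    IsParisiCritical a b (√(b * (1 + z)))⁻¹ (z * (√(b * (1 + z)))⁻¹) := by
  have hprod : 0 < b * (1 + z) := by positivity
  have hs : 0 < √(b * (1 + z)) := sqrt_pos.2 hprod
  have hsq : √(b * (1 + z)) ^ 2 = b * (1 + z) := sq_sqrt hprod.le
  generalize √(b * (1 + z)) = s at hs hsq
  have hsum : s⁻¹ + z * s⁻¹ = (1 + z) * s⁻¹ := by ring
  have ha : a = b * critRatio z := by rw [h]; field_simp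
  refine ⟨by positivity, by positivity, ?_, ?_⟩ <;> rw [hsum]
  · field_simp
    rw [hsq]
  · rw [mul_div_cancel_right₀ _ (inv_ne_zero hs.ne'), mul_div_mul_right _ _ (inv_ne_zero hs.ne'),
      mul_pow, inv_pow, hsq, ha, critRatio]
    field_simp
    ring

lemma hasDerivAt_critRatio {z : ℝ} (hz : 0 < z) :
    HasDerivAt critRatio ((2 * z - (z + 2) * log (1 + z)) / z ^ 3) z := by
  have hline : HasDerivAt (fun z : ℝ ↦ 1 + z) 1 z := (hasDerivAt_id z).const_add 1
  refine (((hline.mul (hline.log (by positivity))).sub (hasDerivAt_id z)).div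
    (hasDerivAt_pow 2 z) (by positivity)).congr_deriv ?_
  simp only [Pi.sub_apply, Pi.mul_apply, id]
  field_simp
  ring

lemma deriv_critRatio_neg {z : ℝ} (hz : 0 < z) : (2 * z - (z + 2) * log (1 + z)) / z ^ 3 < 0 := by
  have hlog := lt_log_one_add_of_pos hz
  rw [div_lt_iff₀ (by positivity)] at hlog
  exact div_neg_of_neg_of_pos (by linarith) (by positivity)

lemma hasStrictDerivAt_critRatio {z : ℝ} (hz : 0 < z) :
    HasStrictDerivAt critRatio ((2 * z - (z + 2) * log (1 + z)) / z ^ 3) z := by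
  refine hasStrictDerivAt_of_hasDerivAt_of_continuousAt (f' := fun z ↦
    (2 * z - (z + 2) * log (1 + z)) / z ^ 3)
    ((lt_mem_nhds hz).mono fun _ ↦ hasDerivAt_critRatio) ?_
  have : 1 + z ≠ 0 := by positivity
  have : z ^ 3 ≠ 0 := by positivity
  fun_prop (disch := assumption)

lemma exists_continuousAt_critRatio_right_inverse {z₀ : ℝ} (hz₀ : 0 < z₀) :
    ∃ ζ : ℝ → ℝ, ζ (critRatio z₀) = z₀ ∧ ContinuousAt ζ (critRatio z₀) ∧
      ∀ᶠ r in nhds (critRatio z₀), critRatio (ζ r) = r := by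
  have hstrict := hasStrictDerivAt_critRatio hz₀
  have hne := (deriv_critRatio_neg hz₀).ne
  exact ⟨hstrict.localInverse _ _ _ hne, HasStrictFDerivAt.localInverse_apply_image _,
    (hstrict.to_localInverse hne).hasDerivAt.continuousAt, hstrict.eventually_right_inverse hne⟩

lemma tendsto_critRatio_atTop : Tendsto critRatio atTop (nhds 0) := by
  have hlog : Tendsto (fun z : ℝ ↦ log (1 + z) / z) atTop (nhds 0) := by
    have := (tendsto_pow_log_div_mul_add_atTop 1 (-1) 1 one_ne_zero).comp
      (tendsto_atTop_add_const_left atTop (1 : ℝ) tendsto_id)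
    refine this.congr fun z ↦ ?_
    simp
  have hlim := (((tendsto_inv_atTop_zero (𝕜 := ℝ)).const_add 1).mul hlog).sub tendsto_inv_atTop_zero
  rw [mul_zero, sub_zero] at hlim
  refine hlim.congr' ?_
  filter_upwards [eventually_gt_atTop 0] with z hz
  rw [critRatio]
  field_simp
  ring

lemma exists_critRatio_eq {r z₀ : ℝ} (hz₀ : 0 < z₀) (hr : 0 < r) (hlt : r < critRatio z₀) :
    ∃ z > z₀, critRatio z = r := by
  obtain ⟨T, hT, hT₀⟩ :=
    ((tendsto_critRatio_atTop.eventually_lt_const hr).and (eventually_ge_atTop z₀)).exists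
  have hcont : ContinuousOn critRatio (Icc z₀ T) := fun z hz ↦
    (hasDerivAt_critRatio (hz₀.trans_le hz.1)).continuousAt.continuousWithinAt
  obtain ⟨z, hz, rfl⟩ := intermediate_value_Icc' hT₀ hcont ⟨hT.le, hlt.le⟩
  exact ⟨z, hz.1.lt_of_ne (by rintro rfl; exact hlt.false), rfl⟩

/-! ### The ground state energy as a Parisi minimum -/

/-- The quadratic form `(u, x) Σ⁻¹ (u, x)ᵀ` of the symmetric matrix `Σ = !![a, b; b, d]`. -/
def covQuad (a b d u x : ℝ) : ℝ := (d * u ^ 2 - 2 * b * u * x + a * x ^ 2) / (a * d - b ^ 2)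

lemma dotProduct_inv_mulVec_eq_covQuad (a b d u x : ℝ) :
    ![u, x] ⬝ᵥ (!![a, b; b, d]⁻¹ *ᵥ ![u, x]) = covQuad a b d u x := by
  rw [covQuad, Matrix.inv_def, Matrix.det_fin_two_of, Matrix.adjugate_fin_two_of,
    Ring.inverse_eq_inv']
  simp only [Matrix.smul_of, Matrix.mulVec, dotProduct, Fin.sum_univ_two, Matrix.of_apply,
    Matrix.smul_cons, Matrix.smul_empty, Matrix.cons_val_zero, Matrix.cons_val_one, smul_eq_mul]
  rw [div_eq_inv_mul, ← sq b]
  ring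

section CovQuad

variable {a b d : ℝ}

lemma covQuad_sub_mulVec (hdet : a * d - b ^ 2 ≠ 0) (w k u x : ℝ) :
    covQuad a b d (u - (a * w + b * k)) (x - (b * w + d * k)) =
      covQuad a b d u x - 2 * (w * u + k * x) + (a * w ^ 2 + 2 * b * w * k + d * k ^ 2) := by
  rw [covQuad, covQuad, div_eq_iff hdet]
  linear_combination -div_mul_cancel₀ (d * u ^ 2 - 2 * b * u * x + a * x ^ 2) hdet

lemma sq_div_le_covQuad (hdet : 0 < a * d - b ^ 2) (hd : 0 < d) (u x : ℝ) :
    x ^ 2 / d ≤ covQuad a b d u x := by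
  rw [covQuad, div_le_div_iff₀ hd hdet]
  linear_combination sq_nonneg (d * u - b * x)

end CovQuad

/-- `Θ_{ν,1}` as a function of `a = ν(1)`, `b = ν′(1)` and `c = ν″(1)`. -/
def complexity (a b c u x : ℝ) : ℝ :=
  1 / 2 + 1 / 2 * log (c / b) - 1 / 2 * covQuad a b (c + b) u x + Omega (x / √c)

lemma Theta_one_eq_complexity (γ : ℕ → ℝ) (u x : ℝ) :
    Theta γ 1 u x = complexity (nuF γ 1) (nuD1 γ 1) (nuD2 γ 1) u x := by
  simp only [Theta, SigmaQ, complexity, one_pow, one_mul, dotProduct_inv_mulVec_eq_covQuad]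

section OmegaScaled

variable {c k : ℝ} (hc : 0 < c) (hk : 0 < k) (hck : c * k ^ 2 < 1)
include hc hk hck

lemma sqrt_mul_lt_one : √c * k < 1 := by
  rwa [← sqrt_sq hk.le, ← sqrt_mul hc.le, sqrt_lt' one_pos, one_pow]

lemma Omega_neg_div_sqrt :
    Omega (-(c * k + k⁻¹) / √c) = c * k ^ 2 / 2 - log (√c * k) := by
  have := sqrt_pos.2 hc
  have hsq : √c ^ 2 = c := sq_sqrt hc.le
  have harg : -(c * k + k⁻¹) / √c = -(√c * k + (√c * k)⁻¹) := by
    field_simp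
    rw [hsq, mul_comm]
  rw [harg, Omega_neg_add_inv (by positivity) (sqrt_mul_lt_one hc hk hck), mul_pow, hsq]

lemma Omega_div_sqrt_le (x : ℝ) :
    Omega (x / √c) ≤ c * k ^ 2 / 2 - log (√c * k) - k * (x + (c * k + k⁻¹)) +
      (x + (c * k + k⁻¹)) ^ 2 / (4 * c) := by
  have := sqrt_pos.2 hc
  have hsq : √c ^ 2 = c := sq_sqrt hc.le
  have harg : x / √c + (√c * k + (√c * k)⁻¹) = (x + (c * k + k⁻¹)) / √c := by
    field_simp
    rw [hsq]
    ring
  have hbound := Omega_le_parabola (by positivity) (sqrt_mul_lt_one hc hk hck) (x / √c)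
  rw [harg, mul_pow, hsq, div_pow, hsq] at hbound
  convert hbound using 2
  · field_simp
  · field_simp

end OmegaScaled

namespace IsParisiCritical

variable {a b c k w : ℝ} (h : IsParisiCritical a b k w)
include h

lemma b_pos : 0 < b := by
  have := h.k_pos
  have := h.w_pos
  rw [h.b_eq]
  positivity

lemma mul_add_inv_eq : c * k + k⁻¹ = b * w + (c + b) * k := by
  have : k⁻¹ = b * (k + w) := inv_eq_of_mul_eq_one_right (by linarith [h.stationary_k])
  rw [this]
  ring

lemma complexity_const_eq_zero (hc : 0 < c) :
    1 / 2 + 1 / 2 * log (c / b) - 1 / 2 * (a * w ^ 2 + 2 * b * w * k + (c + b) * k ^ 2) +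
      (c * k ^ 2 / 2 - log (√c * k)) = 0 := by
  have hk := h.k_pos
  have hw := h.w_pos
  have hlog : log (c / b) = 2 * log (√c * k) + log ((k + w) / k) := by
    rw [← Nat.cast_two, ← log_pow, mul_pow, sq_sqrt hc.le,
      ← log_mul (by positivity) (by positivity), h.b_eq]
    congr 1
    field_simp
  have hfrac : w / (k + w) = b * (k * w) := by
    rw [h.b_eq]
    field_simp
  rw [hlog, ← h.stationary_w, hfrac]
  linarith [h.stationary_k]

variable (hc : 0 < c) (hck : c * k ^ 2 < 1) (hdet : 0 < a * (c + b) - b ^ 2)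
include hc hck hdet

lemma complexity_eq_zero : complexity a b c (-(a * w + b * k)) (-(c * k + k⁻¹)) = 0 := by
  have hquad : covQuad a b (c + b) (-(a * w + b * k)) (-(c * k + k⁻¹)) =
      a * w ^ 2 + 2 * b * w * k + (c + b) * k ^ 2 := by
    have := covQuad_sub_mulVec hdet.ne' w k 0 0
    rw [zero_sub, zero_sub, ← h.mul_add_inv_eq] at this
    simpa [covQuad] using this
  rw [complexity, hquad, Omega_neg_div_sqrt hc h.k_pos hck, h.complexity_const_eq_zero hc]

lemma complexity_le (u x : ℝ) :
    complexity a b c u x ≤ w * (u + (a * w + b * k)) -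
      (1 / (2 * (c + b)) - 1 / (4 * c)) * (x + (c * k + k⁻¹)) ^ 2 := by
  have hquad := covQuad_sub_mulVec hdet.ne' w k (u + (a * w + b * k)) (x + (c * k + k⁻¹))
  rw [← h.mul_add_inv_eq, add_sub_cancel_right, add_sub_cancel_right] at hquad
  have hschur := sq_div_le_covQuad hdet (add_pos hc h.b_pos) (u + (a * w + b * k))
    (x + (c * k + k⁻¹))
  have hconst := h.complexity_const_eq_zero hc
  have hOmega := Omega_div_sqrt_le hc h.k_pos hck x
  have hcoeff : (1 / (2 * (c + b)) - 1 / (4 * c)) * (x + (c * k + k⁻¹)) ^ 2 =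
      (x + (c * k + k⁻¹)) ^ 2 / (c + b) / 2 - (x + (c * k + k⁻¹)) ^ 2 / (4 * c) := by
    rw [← div_div]
    ring
  rw [complexity, hquad, hcoeff]
  linarith

end IsParisiCritical

section SupTheta

variable {γ : ℕ → ℝ} {w E X κ : ℝ} (hw : 0 < w) (hκ : 0 < κ) (hzero : Theta γ 1 (-E) (-X) = 0)
  (hle : ∀ u x, Theta γ 1 u x ≤ w * (u + E) - κ * (x + X) ^ 2)
include hw hκ hzero hle

/-- The slope bound makes `sup_x Θ(u, x)` negative for `u < -E`. -/
lemma E0_eq_of_Theta_le : E0 γ = E := by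
  have hle' (u x : ℝ) : Theta γ 1 u x ≤ w * (u + E) :=
    (hle u x).trans (sub_le_self _ (by positivity))
  have hleast : IsLeast {u : ℝ | ⨆ x, Theta γ 1 u x = 0} (-E) := by
    constructor
    · have hmax (x : ℝ) : Theta γ 1 (-E) x ≤ 0 := (hle' _ x).trans_eq (by simp)
      exact le_antisymm (ciSup_le hmax) (hzero ▸ le_ciSup ⟨0, forall_mem_range.2 hmax⟩ (-X))
    · intro u hu
      by_contra! hlt
      have hneg : ⨆ x, Theta γ 1 u x ≤ w * (u + E) := ciSup_le (hle' u)
      exact (hneg.trans_lt (mul_neg_of_pos_of_neg hw (by linarith))).ne hu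
  rw [E0, hleast.csInf_eq, neg_neg]

lemma x0_eq_of_Theta_le : x0 γ = X := by
  have hE := E0_eq_of_Theta_le hw hκ hzero hle
  have hargmax : {x | ∀ y, Theta γ 1 (-E0 γ) y ≤ Theta γ 1 (-E0 γ) x} = {-X} := by
    ext x
    rw [mem_ofPred_eq, mem_singleton_iff, hE]
    constructor
    · intro hx
      have hnonneg := hzero ▸ hx (-X)
      have hxle := hle (-E) x
      rw [neg_add_cancel, mul_zero, zero_sub] at hxle
      have hsq : (x + X) ^ 2 ≤ 0 := nonpos_of_mul_nonpos_right (by linarith) hκ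
      have := pow_eq_zero_iff two_ne_zero |>.1 (hsq.antisymm (sq_nonneg (x + X)))
      linarith
    · rintro rfl y
      rw [hzero]
      refine (hle (-E) y).trans ?_
      rw [neg_add_cancel, mul_zero, zero_sub, neg_nonpos]
      positivity
  rw [x0, hargmax, csSup_singleton, neg_neg]

end SupTheta

namespace IsParisiCritical

variable {γ : ℕ → ℝ} {k w : ℝ} (h : IsParisiCritical (nuF γ 1) (nuD1 γ 1) k w)
  (hck : nuD2 γ 1 * k ^ 2 < 1) (hbc : nuD1 γ 1 < nuD2 γ 1)
  (hdet : 0 < nuF γ 1 * (nuD2 γ 1 + nuD1 γ 1) - nuD1 γ 1 ^ 2)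
include h hck hbc hdet

lemma E0_eq_and_x0_eq :
    E0 γ = parisi (nuF γ 1) (nuD1 γ 1) k w ∧ x0 γ = nuD2 γ 1 * k + k⁻¹ := by
  have hc : 0 < nuD2 γ 1 := h.b_pos.trans hbc
  have hb := h.b_pos
  have hκ : 0 < 1 / (2 * (nuD2 γ 1 + nuD1 γ 1)) - 1 / (4 * nuD2 γ 1) :=
    sub_pos.2 (one_div_lt_one_div_of_lt (by positivity) (by linarith))
  have hzero := h.complexity_eq_zero hc hck hdet
  have hle := h.complexity_le hc hck hdet
  simp only [← Theta_one_eq_complexity] at hzero hle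
  exact ⟨(E0_eq_of_Theta_le h.w_pos hκ hzero hle).trans h.parisi_eq.symm,
    x0_eq_of_Theta_le h.w_pos hκ hzero hle⟩

end IsParisiCritical

/-! ### Moments of `ν` under rescaling -/

/-- The coefficient of `x ^ p` in `ν`. -/
def nuCoeff (γ : ℕ → ℝ) (p : ℕ) : ℝ := if 2 ≤ p then γ p ^ 2 else 0

/-- `∑ pʲ γ_p²`, the value at `1` of `(x d/dx)ʲ ν`. -/
def moment (γ : ℕ → ℝ) (j : ℕ) : ℝ := ∑' p : ℕ, (p : ℝ) ^ j * nuCoeff γ p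

lemma nuCoeff_nonneg (γ : ℕ → ℝ) (p : ℕ) : 0 ≤ nuCoeff γ p := by
  unfold nuCoeff
  split_ifs <;> positivity

lemma nuCoeff_gammaScale (γ : ℕ → ℝ) (t : ℝ) (p : ℕ) :
    nuCoeff (gammaScale γ t) p = nuCoeff γ p * t ^ (2 * p) := by
  unfold nuCoeff gammaScale
  split_ifs
  · ring
  · simp

lemma gammaScale_one (γ : ℕ → ℝ) : gammaScale γ 1 = γ := by
  ext p
  simp [gammaScale]

lemma gammaScale_gammaScale (γ : ℕ → ℝ) (q s : ℝ) :
    gammaScale (gammaScale γ q) s = gammaScale γ (q * s) := by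
  ext p
  simp only [gammaScale]
  ring

lemma Mixed.gammaScale {γ : ℕ → ℝ} (h : Mixed γ) {q : ℝ} (hq : q ≠ 0) :
    Mixed (gammaScale γ q) := by
  obtain ⟨p, p', hp, hp', hne, hγp, hγp'⟩ := h
  exact ⟨p, p', hp, hp', hne, mul_ne_zero hγp (pow_ne_zero _ hq),
    mul_ne_zero hγp' (pow_ne_zero _ hq)⟩

lemma nuF_one (γ : ℕ → ℝ) : nuF γ 1 = moment γ 0 :=
  tsum_congr fun p ↦ by simp [nuCoeff]

lemma nuD1_one (γ : ℕ → ℝ) : nuD1 γ 1 = moment γ 1 :=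
  tsum_congr fun p ↦ by simp [nuCoeff, mul_comm]

namespace GammaDecay

lemma exists_one_lt_forall_gammaScale {γ : ℕ → ℝ} (hγ : GammaDecay γ) :
    ∃ r > 1, ∀ t ∈ Ioo 0 r, GammaDecay (gammaScale γ t) := by
  obtain ⟨hnonneg, ρ, hρ₀, hρ₁, hle⟩ := hγ
  refine ⟨ρ⁻¹, (one_lt_inv₀ hρ₀).2 hρ₁, fun t ⟨ht₀, ht₁⟩ ↦ ⟨fun p ↦ ?_, ρ * t, ?_, ?_, ?_⟩⟩
  · exact mul_nonneg (hnonneg p) (by positivity)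
  · positivity
  · rwa [lt_inv_comm₀ ht₀ hρ₀, ← one_div, lt_div_iff₀ ht₀] at ht₁
  · filter_upwards [hle] with p hp
    rw [gammaScale, mul_pow]
    gcongr

variable {γ : ℕ → ℝ} (hγ : GammaDecay γ)
include hγ

lemma eventually_gammaScale : ∀ᶠ t in nhds 1, GammaDecay (gammaScale γ t) := by
  obtain ⟨r, hr, h⟩ := hγ.exists_one_lt_forall_gammaScale
  filter_upwards [Ioo_mem_nhds zero_lt_one hr] using h

lemma summable_moment (j : ℕ) : Summable fun p : ℕ ↦ (p : ℝ) ^ j * nuCoeff γ p := by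
  obtain ⟨hnonneg, ρ, hρ₀, hρ₁, hle⟩ := hγ
  have hgeom : Summable fun p : ℕ ↦ (p : ℝ) ^ j * (ρ ^ 2) ^ p :=
    summable_pow_mul_geometric_of_norm_lt_one j (by
      rw [norm_of_nonneg (by positivity)]
      exact pow_lt_one₀ hρ₀.le hρ₁ two_ne_zero)
  refine hgeom.of_norm_bounded_eventually_nat ?_
  filter_upwards [hle, eventually_ge_atTop 2] with p hp hp₂
  rw [norm_of_nonneg (mul_nonneg (by positivity) (nuCoeff_nonneg γ p)), nuCoeff, if_pos hp₂,
    ← pow_mul, mul_comm 2, pow_mul]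
  gcongr
  exact hnonneg p

lemma nuD2_one : nuD2 γ 1 = moment γ 2 - moment γ 1 := by
  rw [moment, moment, ← (hγ.summable_moment 2).tsum_sub (hγ.summable_moment 1)]
  refine tsum_congr fun p ↦ ?_
  unfold nuCoeff
  split_ifs
  · rw [one_pow]
    ring
  · simp

lemma quadratic_moment_pos {α β δ : ℝ}
    (hnonneg : ∀ p : ℕ, 2 ≤ p → 0 ≤ α * (p : ℝ) ^ 2 + β * p + δ) {p : ℕ} (hp : 2 ≤ p)
    (hγp : γ p ≠ 0) (hpos : 0 < α * (p : ℝ) ^ 2 + β * p + δ) :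
    0 < α * moment γ 2 + β * moment γ 1 + δ * moment γ 0 := by
  have hsum := (((hγ.summable_moment 2).hasSum.mul_left α).add
    ((hγ.summable_moment 1).hasSum.mul_left β)).add ((hγ.summable_moment 0).hasSum.mul_left δ)
  have hterm : (fun p : ℕ ↦ α * ((p : ℝ) ^ 2 * nuCoeff γ p) + β * ((p : ℝ) ^ 1 * nuCoeff γ p) +
      δ * ((p : ℝ) ^ 0 * nuCoeff γ p)) =
      fun p : ℕ ↦ (α * (p : ℝ) ^ 2 + β * p + δ) * nuCoeff γ p := by
    ext p
    ring
  rw [hterm] at hsum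
  refine hasSum_lt (i := p) (fun p ↦ ?_) ?_ hasSum_zero hsum
  · by_cases hp₂ : 2 ≤ p
    · exact mul_nonneg (hnonneg p hp₂) (nuCoeff_nonneg γ p)
    · simp [nuCoeff, hp₂]
  · rw [nuCoeff, if_pos hp]
    positivity

variable (hmixed : Mixed γ)
include hmixed

lemma nuF_one_pos : 0 < nuF γ 1 := by
  obtain ⟨p, -, hp, -, -, hγp, -⟩ := hmixed
  simpa [nuF_one] using hγ.quadratic_moment_pos (α := 0) (β := 0) (δ := 1) (by simp) hp hγp
    (by simp)

lemma nuD1_one_pos : 0 < nuD1 γ 1 := by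
  obtain ⟨p, -, hp, -, -, hγp, -⟩ := hmixed
  simpa [nuD1_one] using hγ.quadratic_moment_pos (α := 0) (β := 1) (δ := 0) (by simp) hp hγp
    (by simp; omega)

lemma nuD1_one_lt_nuD2_one : nuD1 γ 1 < nuD2 γ 1 := by
  obtain ⟨p, hp, hγp⟩ : ∃ p : ℕ, 2 < p ∧ γ p ≠ 0 := by
    obtain ⟨p, p', hp, hp', hne, hγp, hγp'⟩ := hmixed
    rcases hp.eq_or_lt with rfl | hlt
    exacts [⟨p', by omega, hγp'⟩, ⟨p, hlt, hγp⟩]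
  have hpos := hγ.quadratic_moment_pos (α := 1) (β := -2) (δ := 0)
    (fun p hp ↦ by
      have : (2 : ℝ) ≤ p := mod_cast hp
      nlinarith) hp.le hγp (by
      have : (2 : ℝ) < p := mod_cast hp
      nlinarith)
  rw [nuD1_one, hγ.nuD2_one]
  linarith

/-- Strict Cauchy–Schwarz: `m₀² m₂ - m₀ m₁² = ∑ (m₀ p - m₁)² γ_p²`. -/
lemma nuF_one_mul_sub_sq_pos : 0 < nuF γ 1 * (nuD2 γ 1 + nuD1 γ 1) - nuD1 γ 1 ^ 2 := by
  have hm₀ := hγ.nuF_one_pos hmixed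
  rw [nuF_one] at hm₀
  obtain ⟨p, hp, hγp, hne⟩ : ∃ p, 2 ≤ p ∧ γ p ≠ 0 ∧ moment γ 0 * p - moment γ 1 ≠ 0 := by
    obtain ⟨p, p', hp, hp', hne, hγp, hγp'⟩ := hmixed
    by_cases hmean : moment γ 0 * p - moment γ 1 = 0
    · refine ⟨p', hp', hγp', fun hmean' ↦ hne ?_⟩
      exact_mod_cast mul_left_cancel₀ hm₀.ne' (show moment γ 0 * p = moment γ 0 * p' by linarith)
    · exact ⟨p, hp, hγp, hmean⟩
  have hsquare (p : ℕ) : moment γ 0 ^ 2 * (p : ℝ) ^ 2 + -2 * moment γ 0 * moment γ 1 * p +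
      moment γ 1 ^ 2 = (moment γ 0 * p - moment γ 1) ^ 2 := by ring
  have hpos := hγ.quadratic_moment_pos (fun p _ ↦ hsquare p ▸ sq_nonneg _) hp hγp
    (hsquare p ▸ by positivity)
  rw [nuF_one, nuD1_one, hγ.nuD2_one]
  refine pos_of_mul_pos_right (a := moment γ 0) ?_ hm₀.le
  linarith

end GammaDecay

lemma hasDerivAt_moment_gammaScale {γ : ℕ → ℝ} (hγ : GammaDecay γ) (j : ℕ) :
    HasDerivAt (fun t ↦ moment (gammaScale γ t) j) (2 * moment γ (j + 1)) 1 := by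
  obtain ⟨r, hr, hscale⟩ := hγ.exists_one_lt_forall_gammaScale
  obtain ⟨s, hs₁, hsr⟩ := exists_between hr
  have hdom := ((hscale s ⟨by linarith, hsr⟩).summable_moment (j + 1)).mul_left 2
  have hterm (p : ℕ) (t : ℝ) : HasDerivAt (fun t ↦ (p : ℝ) ^ j * nuCoeff (gammaScale γ t) p)
      (2 * ((p : ℝ) ^ (j + 1) * (nuCoeff γ p * t ^ (2 * p - 1)))) t := by
    simp only [nuCoeff_gammaScale]
    refine (((hasDerivAt_pow (2 * p) t).const_mul (nuCoeff γ p)).const_mul _).congr_deriv ?_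
    push_cast
    ring
  have hbound (p : ℕ) (t : ℝ) (ht : t ∈ Ioo 0 s) :
      ‖2 * ((p : ℝ) ^ (j + 1) * (nuCoeff γ p * t ^ (2 * p - 1)))‖ ≤
        2 * ((p : ℝ) ^ (j + 1) * nuCoeff (gammaScale γ s) p) := by
    have := nuCoeff_nonneg γ p
    have ht₀ := ht.1
    rw [norm_of_nonneg (by positivity), nuCoeff_gammaScale]
    gcongr
    calc t ^ (2 * p - 1) ≤ s ^ (2 * p - 1) := pow_le_pow_left₀ ht₀.le ht.2.le _
      _ ≤ s ^ (2 * p) := pow_le_pow_right₀ hs₁.le (Nat.sub_le _ _)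
  have hone : (1 : ℝ) ∈ Ioo 0 s := ⟨one_pos, hs₁⟩
  refine (hasDerivAt_tsum_of_isPreconnected hdom isOpen_Ioo isPreconnected_Ioo
    (fun p t _ ↦ hterm p t) hbound hone ?_ hone).congr_deriv ?_
  · simpa only [gammaScale_one] using hγ.summable_moment j
  · simp only [one_pow, mul_one, tsum_mul_left, moment]

section ScaleDerivatives

variable {γ : ℕ → ℝ} (hγ : GammaDecay γ)
include hγ

lemma hasDerivAt_nuF_gammaScale :
    HasDerivAt (fun t ↦ nuF (gammaScale γ t) 1) (2 * nuD1 γ 1) 1 := by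
  simpa only [nuF_one, nuD1_one] using hasDerivAt_moment_gammaScale hγ 0

lemma hasDerivAt_nuD1_gammaScale :
    HasDerivAt (fun t ↦ nuD1 (gammaScale γ t) 1) (2 * (nuD2 γ 1 + nuD1 γ 1)) 1 := by
  simpa only [nuD1_one, hγ.nuD2_one, sub_add_cancel] using hasDerivAt_moment_gammaScale hγ 1

lemma continuousAt_nuD2_gammaScale : ContinuousAt (fun t ↦ nuD2 (gammaScale γ t) 1) 1 :=
  ((hasDerivAt_moment_gammaScale hγ 2).continuousAt.sub
    (hasDerivAt_moment_gammaScale hγ 1).continuousAt).congr <|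
    hγ.eventually_gammaScale.mono fun _ ht ↦ ht.nuD2_one.symm

end ScaleDerivatives

/-! ### Differentiating the Parisi minimum -/

/-- `ν` is pure-like in the sense of Auffinger and Ben Arous: this is `PureLike` with the factor
`ν″(1) + ν′(1)` of `Gfun` replaced by `ν″(1) - ν′(1)`. -/
def WeaklyPureLike (γ : ℕ → ℝ) : Prop :=
  0 < log (nuD2 γ 1 / nuD1 γ 1) -
    (nuD2 γ 1 - nuD1 γ 1) * (nuD2 γ 1 * nuF γ 1 + nuD1 γ 1 ^ 2 - nuD1 γ 1 * nuF γ 1) /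
      (nuD2 γ 1 * nuD1 γ 1 ^ 2)

section PureLike

variable {γ : ℕ → ℝ} (hγ : GammaDecay γ) (hmixed : Mixed γ)
include hγ hmixed

lemma PureLike.weaklyPureLike (h : PureLike γ) : WeaklyPureLike γ := by
  have ha := hγ.nuF_one_pos hmixed
  have hb := hγ.nuD1_one_pos hmixed
  have hbc := hγ.nuD1_one_lt_nuD2_one hmixed
  have hc := hb.trans hbc
  have hfactor : 0 ≤ nuD2 γ 1 * nuF γ 1 + nuD1 γ 1 ^ 2 - nuD1 γ 1 * nuF γ 1 := by nlinarith
  refine lt_of_lt_of_le h ?_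
  unfold Gfun
  gcongr
  linarith

lemma weaklyPureLike_iff :
    WeaklyPureLike γ ↔ nuF γ 1 / nuD1 γ 1 < critRatio (nuD2 γ 1 / nuD1 γ 1 - 1) := by
  have hb := hγ.nuD1_one_pos hmixed
  have hbc := hγ.nuD1_one_lt_nuD2_one hmixed
  rw [WeaklyPureLike, critRatio]
  generalize nuF γ 1 = a, nuD1 γ 1 = b, nuD2 γ 1 = c at *
  have hc : 0 < c := hb.trans hbc
  have hz : 0 < c / b - 1 := by rwa [sub_pos, one_lt_div hb]
  rw [add_sub_cancel, lt_div_iff₀ (by positivity), ← sub_pos (b := a / b * _),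
    ← mul_pos_iff_of_pos_left (div_pos hc hb)]
  congr! 1
  field_simp
  ring

end PureLike

lemma WeaklyPureLike.eventually_gammaScale {γ : ℕ → ℝ} (hγ : GammaDecay γ)
    (hb : nuD1 γ 1 ≠ 0) (hc : nuD2 γ 1 ≠ 0) (h : WeaklyPureLike γ) :
    ∀ᶠ t in nhds 1, WeaklyPureLike (gammaScale γ t) := by
  have hA := (hasDerivAt_nuF_gammaScale hγ).continuousAt
  have hB := (hasDerivAt_nuD1_gammaScale hγ).continuousAt
  have hC := continuousAt_nuD2_gammaScale hγ
  refine ContinuousAt.eventually_lt continuousAt_const ?_ (by rwa [gammaScale_one])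
  refine ((hC.div hB ?_).log ?_).sub
    (((hC.sub hB).mul (((hC.mul hA).add (hB.pow 2)).sub (hB.mul hA))).div (hC.mul (hB.pow 2)) ?_)
  all_goals simp [gammaScale_one, hb, hc]

/-- Critical points depend continuously on the data: `w / k` solves `critRatio (w / k) = a / b`, and
`c * k ^ 2 < 1` says that `w / k` exceeds `c / b - 1`. -/
lemma exists_continuousAt_isParisiCritical {X : Type*} [TopologicalSpace X] {A B C : X → ℝ} {q : X}
    (hA : ContinuousAt A q) (hB : ContinuousAt B q) (hC : ContinuousAt C q) (ha : 0 < A q)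
    (hb : 0 < B q) (hbc : B q < C q) (hratio : A q / B q < critRatio (C q / B q - 1)) :
    ∃ K W : X → ℝ, ContinuousAt K q ∧ ContinuousAt W q ∧
      ∀ᶠ t in nhds q, IsParisiCritical (A t) (B t) (K t) (W t) ∧ C t * K t ^ 2 < 1 := by
  have hz₀ : 0 < C q / B q - 1 := by rwa [sub_pos, one_lt_div hb]
  obtain ⟨z, hz, hzr⟩ := exists_critRatio_eq hz₀ (div_pos ha hb) hratio
  have hzpos : 0 < z := hz₀.trans hz
  obtain ⟨ζ, hζz, hζcont, hζinv⟩ := exists_continuousAt_critRatio_right_inverse hzpos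
  rw [hzr] at hζz hζcont hζinv
  have hR : ContinuousAt (fun t ↦ A t / B t) q := hA.div hB hb.ne'
  have hZ : ContinuousAt (fun t ↦ ζ (A t / B t)) q := hζcont.comp (f := fun t ↦ A t / B t) hR
  have hZpos : 0 < ζ (A q / B q) := hζz ▸ hzpos
  have hsq : ContinuousAt (fun t ↦ B t * (1 + ζ (A t / B t))) q := hB.mul (hZ.const_add 1)
  have hK : ContinuousAt (fun t ↦ (√(B t * (1 + ζ (A t / B t))))⁻¹) q :=
    hsq.sqrt.inv₀ (sqrt_pos.2 (by positivity)).ne'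
  have hC_lt : C q < B q * (1 + ζ (A q / B q)) := by
    rw [hζz, ← div_lt_iff₀' hb]
    linarith
  refine ⟨_, _, hK, hZ.mul hK, ?_⟩
  filter_upwards [hB.eventually_const_lt hb, hZ.eventually_const_lt hZpos, hR.eventually hζinv,
    hC.eventually_lt hsq hC_lt] with t hBt hZt hcrit hCt
  refine ⟨isParisiCritical_of_critRatio_eq hBt hZt hcrit, ?_⟩
  rwa [inv_pow, sq_sqrt (by positivity), ← div_eq_mul_inv, div_lt_one (by positivity)]

/-- `f t - f q` lies between `ℓ t (v t - v q)` and `ℓ q (v t - v q)`, which differ by `o(t - q)`. -/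
lemma hasDerivAt_of_supergradient {E : Type*} [NormedAddCommGroup E] [NormedSpace ℝ E]
    {f : ℝ → ℝ} {v : ℝ → E} {v' : E} {ℓ : ℝ → E →L[ℝ] ℝ} {q : ℝ} (hv : HasDerivAt v v' q)
    (hℓ : ContinuousAt ℓ q) (hle : ∀ᶠ t in nhds q, f t ≤ f q + ℓ q (v t - v q))
    (hge : ∀ᶠ t in nhds q, f q ≤ f t + ℓ t (v q - v t)) :
    HasDerivAt f (ℓ q v') q := by
  have hremainder : (fun t ↦ f t - f q - ℓ q (v t - v q)) =o[nhds q] fun t ↦ t - q := by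
    have hbound : (fun t ↦ f t - f q - ℓ q (v t - v q)) =O[nhds q]
        fun t ↦ ‖ℓ t - ℓ q‖ * ‖v t - v q‖ := by
      refine Asymptotics.IsBigO.of_bound 1 ?_
      filter_upwards [hle, hge] with t hlet hget
      have hop := (ℓ t - ℓ q).le_opNorm (v t - v q)
      rw [_root_.sub_apply, norm_eq_abs, abs_le] at hop
      rw [← neg_sub (v t), map_neg] at hget
      rw [one_mul, norm_mul, norm_norm, norm_norm, norm_eq_abs, abs_le]
      constructor <;> linarith
    have hsmall : (fun t ↦ ‖ℓ t - ℓ q‖) =o[nhds q] fun _ ↦ (1 : ℝ) :=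
      (Asymptotics.isLittleO_one_iff ℝ).2 (tendsto_iff_norm_sub_tendsto_zero.1 hℓ)
    simpa only [one_mul] using hbound.trans_isLittleO (hsmall.mul_isBigO hv.isBigO_sub.norm_left)
  have hlinear : HasDerivAt (fun t ↦ ℓ q (v t)) (ℓ q v') q := (ℓ q).hasFDerivAt.comp_hasDerivAt q hv
  rw [hasDerivAt_iff_isLittleO] at hlinear ⊢
  refine (hremainder.add hlinear).congr_left fun t ↦ ?_
  rw [map_sub]
  ring

lemma parisi_eq_add (a b a' b' k w : ℝ) :
    parisi a' b' k w = parisi a b k w + (w * (a' - a) + k * (b' - b)) / 2 := by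
  unfold parisi
  ring

/-- The gradient of `parisi · · k w`, an affine function of `(a, b)`. -/
def parisiGradient (k w : ℝ) : ℝ × ℝ →L[ℝ] ℝ :=
  (w / 2) • ContinuousLinearMap.fst ℝ ℝ ℝ + (k / 2) • ContinuousLinearMap.snd ℝ ℝ ℝ

lemma parisiGradient_apply (k w : ℝ) (y : ℝ × ℝ) :
    parisiGradient k w y = (w * y.1 + k * y.2) / 2 := by
  simp only [parisiGradient, _root_.add_apply, _root_.smul_apply, ContinuousLinearMap.coe_fst',
    ContinuousLinearMap.coe_snd', smul_eq_mul]
  ring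

lemma hasDerivAt_of_eventually_eq_parisi {f A B K W : ℝ → ℝ} {A' B' q : ℝ}
    (hA : HasDerivAt A A' q) (hB : HasDerivAt B B' q) (hK : ContinuousAt K q)
    (hW : ContinuousAt W q)
    (hcrit : ∀ᶠ t in nhds q, IsParisiCritical (A t) (B t) (K t) (W t))
    (hf : ∀ᶠ t in nhds q, f t = parisi (A t) (B t) (K t) (W t)) :
    HasDerivAt f ((W q * A' + K q * B') / 2) q := by
  have hℓ : ContinuousAt (fun t ↦ parisiGradient (K t) (W t)) q :=
    ((hW.div_const 2).smul continuousAt_const).add ((hK.div_const 2).smul continuousAt_const)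
  have hsuper {s t : ℝ} (hs : IsParisiCritical (A s) (B s) (K s) (W s))
      (ht : IsParisiCritical (A t) (B t) (K t) (W t)) (hfs : f s = parisi (A s) (B s) (K s) (W s))
      (hft : f t = parisi (A t) (B t) (K t) (W t)) :
      f t ≤ f s + parisiGradient (K s) (W s) ((A t, B t) - (A s, B s)) := by
    calc f t ≤ parisi (A t) (B t) (K s) (W s) := hft ▸ ht.parisi_le hs.k_pos hs.w_pos
      _ = _ := by
        rw [parisi_eq_add (A s) (B s), hfs, parisiGradient_apply, Prod.fst_sub, Prod.snd_sub]
  refine (hasDerivAt_of_supergradient (hA.prodMk hB) hℓ ?_ ?_).congr_deriv ?_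
  · filter_upwards [hcrit, hf] with t ht hft using hsuper hcrit.self_of_nhds ht hf.self_of_nhds hft
  · filter_upwards [hcrit, hf] with t ht hft using hsuper ht hcrit.self_of_nhds hft hf.self_of_nhds
  · rw [parisiGradient_apply]

lemma hasDerivAt_E0q_one {γ : ℕ → ℝ} (hγ : GammaDecay γ) (hmixed : Mixed γ)
    (hpure : WeaklyPureLike γ) : HasDerivAt (E0q γ) (x0 γ) 1 := by
  have hA := hasDerivAt_nuF_gammaScale hγ
  have hB := hasDerivAt_nuD1_gammaScale hγ
  obtain ⟨K, W, hK, hW, hKW⟩ := exists_continuousAt_isParisiCritical hA.continuousAt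
    hB.continuousAt (continuousAt_nuD2_gammaScale hγ)
    (by simpa only [gammaScale_one] using hγ.nuF_one_pos hmixed)
    (by simpa only [gammaScale_one] using hγ.nuD1_one_pos hmixed)
    (by simpa only [gammaScale_one] using hγ.nuD1_one_lt_nuD2_one hmixed)
    (by simpa only [gammaScale_one] using (weaklyPureLike_iff hγ hmixed).1 hpure)
  have hE : ∀ᶠ t in nhds 1,
      E0q γ t = parisi (nuF (gammaScale γ t) 1) (nuD1 (gammaScale γ t) 1) (K t) (W t) := by
    filter_upwards [hKW, hγ.eventually_gammaScale, eventually_ne_nhds one_ne_zero]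
      with t ⟨hcrit, hlt⟩ hγt ht
    have hmt := hmixed.gammaScale ht
    exact (hcrit.E0_eq_and_x0_eq hlt (hγt.nuD1_one_lt_nuD2_one hmt)
      (hγt.nuF_one_mul_sub_sq_pos hmt)).1
  refine (hasDerivAt_of_eventually_eq_parisi hA hB hK hW (hKW.mono fun _ ↦ And.left)
    hE).congr_deriv ?_
  obtain ⟨hcrit, hlt⟩ := hKW.self_of_nhds
  rw [gammaScale_one] at hcrit hlt
  rw [(hcrit.E0_eq_and_x0_eq hlt (hγ.nuD1_one_lt_nuD2_one hmixed)
    (hγ.nuF_one_mul_sub_sq_pos hmixed)).2, hcrit.mul_add_inv_eq]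
  ring

lemma E0q_eq_E0q_gammaScale (γ : ℕ → ℝ) {q : ℝ} (hq : q ≠ 0) (t : ℝ) :
    E0q γ t = E0q (gammaScale γ q) (t / q) := by
  rw [E0q, E0q, gammaScale_gammaScale, mul_div_cancel₀ t hq]

lemma hasDerivAt_E0q {γ : ℕ → ℝ} {q : ℝ} (hq : q ≠ 0) (hγ : GammaDecay (gammaScale γ q))
    (hmixed : Mixed γ) (hpure : WeaklyPureLike (gammaScale γ q)) :
    HasDerivAt (E0q γ) (x0q γ q) q := by
  have hscaled := (hasDerivAt_E0q_one hγ (hmixed.gammaScale hq) hpure).comp_of_eq q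
    ((hasDerivAt_id q).div_const q) (div_self hq).symm
  rw [show E0q γ = E0q (gammaScale γ q) ∘ (id · / q) from funext (E0q_eq_E0q_gammaScale γ hq)]
  refine hscaled.congr_deriv ?_
  rw [x0q]
  ring

theorem deriv_E0_eq_x0_general {γ : ℕ → ℝ} (hγ : GammaDecay γ) (hmixed : Mixed γ)
    (hpure : WeaklyPureLike γ) :
    ∃ δ > (0 : ℝ), ∀ q ∈ Ioo (1 - δ) (1 + δ), HasDerivAt (E0q γ) (x0q γ q) q := by
  have hb := hγ.nuD1_one_pos hmixed
  have hc := hb.trans (hγ.nuD1_one_lt_nuD2_one hmixed)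
  have hnear : ∀ᶠ q in nhds (1 : ℝ), HasDerivAt (E0q γ) (x0q γ q) q := by
    filter_upwards [eventually_ne_nhds one_ne_zero, hγ.eventually_gammaScale,
      hpure.eventually_gammaScale hγ hb.ne' hc.ne'] with q hq hγq hpureq
    exact hasDerivAt_E0q hq hγq hmixed hpureq
  simpa only [Metric.eventually_nhds_iff_ball, Real.ball_eq_Ioo] using hnear

/-- Under Condition M, q ↦ E₀(q) is differentiable near 1 with
derivative x₀(q). -/
theorem deriv_E0_eq_x0
    (γ : ℕ → ℝ) (hγ : GammaDecay γ) (hnorm : nuF γ 1 = 1) (hM : ConditionM γ) :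
    ∃ δ > (0 : ℝ), ∀ q ∈ Set.Ioc (1 - δ) (1 : ℝ),
      HasDerivAt (fun t : ℝ => E0q γ t) (x0q γ q) q := by
  obtain ⟨δ, hδ, h⟩ := deriv_E0_eq_x0_general hγ hM.1 (hM.2.1.weaklyPureLike hγ hM.1)
  exact ⟨δ, hδ, fun q hq ↦ h q ⟨hq.1, by linarith [hq.2]⟩⟩

end SpinGlass
end
end
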